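/- arXiv:1605.08204 — 2 statements merged into one kernel-verified Lean document; each statement's English description precedes it below -/
import Mathlib

section
/- Let D be a domain in ℂ and let M be a free maximal ideal of H(D). Then ki(M) := ⋂_{n=1}^∞ Mⁿ equals the set of all f ∈ M such that whenever d ∈ H(D) \ M divides f, say f = q·d with q ∈ H(D), one has o(q) = ∞. -/
set_option synthInstance.maxHeartbeats 400000
set_option maxHeartbeats 800000

/-- The Krull intersection of an ideal `I`: the intersection `⋂_{n=1}^∞ Iⁿ`. -/
def ki {R : Type*} [CommRing R] (I : Ideal R) : Ideal R :=
  ⨅ (n : ℕ) (_ : 1 ≤ n), I ^ n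

/-- The ring `H(D)` of holomorphic functions on a set `D ⊆ ℂ`, realized as the subalgebra of
`D → ℂ` (with pointwise operations) of functions admitting a holomorphic (complex
differentiable) extension to (an ambient function on) `D`. -/
def Hol (D : Set ℂ) : Subalgebra ℂ (D → ℂ) where
  carrier := {f | ∃ F : ℂ → ℂ, DifferentiableOn ℂ F D ∧ ∀ z : D, F z = f z}
  add_mem' := by
    rintro f g ⟨F, hF, hFf⟩ ⟨G, hG, hGg⟩
    exact ⟨F + G, hF.add hG, fun z => by simp [hFf z, hGg z]⟩
  mul_mem' := by
    rintro f g ⟨F, hF, hFf⟩ ⟨G, hG, hGg⟩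
    exact ⟨F * G, hF.mul hG, fun z => by simp [hFf z, hGg z]⟩
  algebraMap_mem' := fun c => ⟨fun _ => c, differentiableOn_const c, fun _ => rfl⟩

/-- The zero set `Z_D(f) = {z ∈ D : f(z) = 0}` of `f ∈ H(D)`. -/
def ZD {D : Set ℂ} (f : Hol D) : Set D := {z | (f : D → ℂ) z = 0}

/-- `ordGE f ζ n` says that the order (multiplicity) of `ζ` as a zero of `f ∈ H(D)` is at
least `n`, expressed by the (equivalent, for `D` open) divisibility condition that
`(z - ζ)^n` divides `f` in `H(D)`. -/
def ordGE {D : Set ℂ} (f : Hol D) (ζ : D) (n : ℕ) : Prop :=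
  ∃ g : Hol D, ∀ z : D, (f : D → ℂ) z = ((z : ℂ) - (ζ : ℂ)) ^ n * (g : D → ℂ) z

/-- `oInf f` says `o(f) = ∞`, where `o(f) := sup_{ζ ∈ Z_D(f)} ord(f,ζ)` for `f ≠ 0` and
`o(0) := ∞`: either `f = 0`, or for every `n` there is a zero of `f` of order at least `n`. -/
def oInf {D : Set ℂ} (f : Hol D) : Prop :=
  f = 0 ∨ ∀ n : ℕ, ∃ ζ ∈ ZD f, ordGE f ζ n

open Set Filter Topology Metric

lemma hk_exists_w {D : Set ℂ} (hD : IsOpen D) :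
    ∃ w e : ℂ → ℂ → ℂ, (∀ a ∈ D, DifferentiableOn ℂ (w a) D ∧ DifferentiableOn ℂ (e a) D ∧
      ∀ z ∈ D, e a z ≠ 0 ∧ 1 - w a z = (z - a) * e a z) ∧
      ∀ K ⊆ D, IsCompact K → ∃ K' ⊆ D, IsCompact K' ∧ ∀ a ∈ D, a ∉ K' → ∀ z ∈ K,
        ‖w a z‖ ≤ 1 / 2 := by
  have key : ∀ a : ℂ, ∃ w e : ℂ → ℂ, a ∈ D → ((DifferentiableOn ℂ w D ∧ DifferentiableOn ℂ e D ∧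
      ∀ z ∈ D, e z ≠ 0 ∧ 1 - w z = (z - a) * e z) ∧
      (a = 0 ∨ (a ≠ 0 ∧ (∀ z, w z = z / a) ∧ (D = univ ∨ 1 ≤ ‖a‖ * infDist a Dᶜ)) ∨
        (D ≠ univ ∧ ‖a‖ * infDist a Dᶜ < 1 ∧ ∃ b, b ∉ D ∧ ‖a - b‖ = infDist a Dᶜ ∧
          ∀ z, w z = (a - b) / (z - b)))) := by
    intro a
    by_cases ha : a ∈ D
    swap
    · exact ⟨0, 0, fun h => absurd h ha⟩
    by_cases ha0 : a = 0
    · refine ⟨fun z => 1 + z, fun _ => -1, fun _ => ⟨⟨by fun_prop, by fun_prop, ?_⟩, Or.inl ha0⟩⟩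
      intro z _
      subst ha0
      exact ⟨by norm_num, by ring⟩
    by_cases hA : D = univ ∨ 1 ≤ ‖a‖ * infDist a Dᶜ
    · refine ⟨fun z => z / a, fun _ => - 1 / a, fun _ => ⟨⟨by fun_prop, by fun_prop, ?_⟩,
        Or.inr (Or.inl ⟨ha0, fun _ => rfl, hA⟩)⟩⟩
      intro z _
      refine ⟨by simp [ha0], ?_⟩
      field_simp
      ring
    · push Not at hA
      obtain ⟨hne, hlt⟩ := hA
      have hne' : Dᶜ.Nonempty := by rwa [nonempty_compl]
      obtain ⟨b, hb, hbd⟩ := hD.isClosed_compl.exists_infDist_eq_dist hne' a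
      have hzb : ∀ z ∈ D, z - b ≠ 0 := by
        intro z hz h
        rw [sub_eq_zero] at h
        subst h
        exact hb hz
      refine ⟨fun z => (a - b) / (z - b), fun z => 1 / (z - b), fun _ => ⟨⟨?_, ?_, ?_⟩,
        Or.inr (Or.inr ⟨hne, hlt, b, hb, by rw [hbd, dist_eq_norm], fun _ => rfl⟩)⟩⟩
      · exact (differentiableOn_const _).div (by fun_prop) hzb
      · exact (differentiableOn_const _).div (by fun_prop) hzb
      · intro z hz
        have := hzb z hz
        refine ⟨by simpa using this, ?_⟩
        field_simp
        ring
  choose w e hwe using key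
  refine ⟨w, e, fun a ha => (hwe a ha).1, ?_⟩
  intro K hKD hK
  obtain ⟨δ, hδ, hδK⟩ := hK.exists_cthickening_subset_open hD hKD
  obtain ⟨R, hR, hRK⟩ := hK.isBounded.exists_pos_norm_le
  have hdist : ∀ z ∈ K, ∀ b, b ∉ D → δ ≤ ‖z - b‖ := by
    intro z hz b hb
    by_contra! h
    apply hb
    apply hδK
    apply mem_cthickening_of_dist_le b z δ K hz
    rw [dist_comm, dist_eq_norm]
    exact h.le
  by_cases hne : D = univ
  · refine ⟨closedBall 0 (2 * R), by simp [hne], isCompact_closedBall _ _, ?_⟩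
    intro a ha haK z hz
    have hz' := hRK z hz
    simp only [mem_closedBall, dist_zero_right, not_le] at haK
    rcases (hwe a ha).2 with h | ⟨_, h, _⟩ | ⟨h, _⟩
    · subst h
      simp at haK
      linarith
    · rw [h, norm_div, div_le_iff₀ (by linarith)]
      linarith
    · exact absurd hne h
  · have hne' : Dᶜ.Nonempty := by rwa [nonempty_compl]
    set η := min (1 / (2 * R)) (δ / 2) with hη
    have hηpos : 0 < η := by positivity
    refine ⟨(closedBall 0 (2 * R + 2 / δ) ∩ {a | η ≤ infDist a Dᶜ}) ∪ ({0} ∩ D), ?_, ?_, ?_⟩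
    · rintro a (⟨_, h⟩ | ⟨_, h⟩)
      · by_contra hcon
        have := infDist_zero_of_mem (show a ∈ Dᶜ from hcon)
        simp only [mem_ofPred_eq] at h
        linarith
      · exact h
    · refine IsCompact.union ?_ ?_
      · exact (isCompact_closedBall _ _).inter_right
          (isClosed_le continuous_const (continuous_infDist_pt _))
      · exact ((finite_singleton 0).subset inter_subset_left).isCompact
    · intro a ha haK z hz
      have hz' := hRK z hz
      have hδ2 : 0 < 2 / δ := by positivity
      simp only [mem_union, mem_inter_iff, mem_closedBall, dist_zero_right, mem_ofPred_eq,
        mem_singleton_iff, not_or, not_and] at haK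
      obtain ⟨h1, h2⟩ := haK
      rcases (hwe a ha).2 with h | ⟨h0, h, h3⟩ | ⟨_, h, b, hb, hab, hw⟩
      · exact absurd ha (h2 h)
      · have h3 := h3.resolve_left hne
        have hapos : 0 < ‖a‖ := norm_pos_iff.2 h0
        rw [h, norm_div, div_le_iff₀ hapos]
        by_contra! hcon
        have h4 : ‖a‖ < 2 * R := by linarith
        apply h1 (by linarith)
        refine (min_le_left _ _).trans ?_
        rw [div_le_iff₀ (by positivity)]
        have : 0 ≤ infDist a Dᶜ := infDist_nonneg
        nlinarith
      · have hd := hdist z hz b hb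
        rw [hw, norm_div, div_le_iff₀ (by linarith), hab]
        by_contra! hcon
        have h4 : δ / 2 < infDist a Dᶜ := by linarith
        refine h1 ?_ ((min_le_right _ _).trans h4.le)
        have : ‖a‖ < 2 / δ := by
          rw [lt_div_iff₀ hδ]
          nlinarith [norm_nonneg a]
        linarith

/-- locally normally convergent sums are holomorphic -/
lemma hk_sum {ι : Type*} {D : Set ℂ} (hD : IsOpen D) {f : ι → ℂ → ℂ} {u : ι → ℝ}
    (hu : Summable u) (hf : ∀ i, DifferentiableOn ℂ (f i) D)
    (hb : ∀ K ⊆ D, IsCompact K → ∃ C : ℝ, ∀ᶠ i in cofinite, ∀ z ∈ K, ‖f i z‖ ≤ C * u i) :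
    DifferentiableOn ℂ (fun z => ∑' i, f i z) D ∧ ∀ z ∈ D, Summable (fun i => f i z) := by
  constructor
  · intro z hz
    obtain ⟨r, hr, hrD⟩ := nhds_basis_closedBall.mem_iff.1 (hD.mem_nhds hz)
    obtain ⟨C, hC⟩ := hb _ hrD (isCompact_closedBall _ _)
    have hbd : ∀ i, ∃ B, ∀ z' ∈ closedBall z r, ‖f i z'‖ ≤ B := fun i =>
      (isCompact_closedBall z r).exists_bound_of_continuousOn ((hf i).continuousOn.mono hrD)
    choose B hB using hbd
    classical
    set s := {i | ¬ ∀ z' ∈ closedBall z r, ‖f i z'‖ ≤ C * u i} with hs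
    have hsf : s.Finite := hC
    let v : ι → ℝ := fun i => if i ∈ s then B i else C * u i
    have hv : Summable v := by
      refine (summable_congr_cofinite ?_).2 (hu.mul_left C)
      filter_upwards [hsf.compl_mem_cofinite] with i hi
      simp only [v]
      rw [if_neg hi]
    have := Complex.differentiableOn_tsum_of_summable_norm (F := f) (U := ball z r) hv
      (fun i => (hf i).mono (ball_subset_closedBall.trans hrD)) isOpen_ball (by
        intro i z' hz'
        simp only [v]
        split_ifs with h
        · exact hB i z' (ball_subset_closedBall hz')
        · simp only [hs, mem_ofPred_eq, not_not] at h
          exact h z' (ball_subset_closedBall hz'))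
    exact (this.differentiableAt (ball_mem_nhds z hr)).differentiableWithinAt
  · intro z hz
    obtain ⟨C, hC⟩ := hb {z} (by simpa using hz) isCompact_singleton
    refine Summable.of_norm_bounded_eventually (hu.mul_left C) ?_
    filter_upwards [hC] with i hi using hi z rfl

lemma hk_prod {ι : Type*} {D : Set ℂ} (hD : IsOpen D) {f : ι → ℂ → ℂ} {u : ι → ℝ}
    (hu : Summable u) (hf : ∀ i, DifferentiableOn ℂ (f i) D)
    (hb : ∀ K ⊆ D, IsCompact K → ∀ᶠ i in cofinite, ∀ z ∈ K, ‖f i z‖ ≤ u i) :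
    DifferentiableOn ℂ (fun z => ∏' i, (1 + f i z)) D ∧ ∀ z ∈ D, Summable (fun i => ‖f i z‖) := by
  constructor
  · have h : HasProdLocallyUniformlyOn (fun i x ↦ 1 + f i x) (fun x ↦ ∏' i, (1 + f i x)) D := by
      apply hasProdLocallyUniformlyOn_of_forall_compact hD
      intro K hK hKc
      exact Summable.hasProdUniformlyOn_one_add hKc hu (hb K hK hKc)
        (fun i => (hf i).continuousOn.mono hK)
    rw [hasProdLocallyUniformlyOn_iff_tendstoLocallyUniformlyOn] at h
    refine h.differentiableOn (Eventually.of_forall fun s => ?_) hD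
    exact DifferentiableOn.fun_finsetProd fun i _ => (differentiableOn_const _).add (hf i)
  · intro z hz
    have hC := hb {z} (by simpa using hz) isCompact_singleton
    refine Summable.of_norm_bounded_eventually hu ?_
    filter_upwards [hC] with i hi
    simpa using hi z rfl

/-- elementary factors: a polynomial-exponential factor close to one on the half disc -/
lemma hk_elem (m : ℕ) {ε : ℝ} (hε : 0 < ε) :
    ∃ g : ℂ → ℂ, Differentiable ℂ g ∧ (∀ w, g w ≠ 0) ∧
      ∀ w, ‖w‖ ≤ 1 / 2 → ‖(1 - w) ^ m * g w - 1‖ ≤ ε := by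
  have hlim : Tendsto (fun n : ℕ => (m : ℝ) * ((1 / 2 : ℝ) ^ (n + 1) * 2)) atTop (𝓝 0) := by
    have := ((tendsto_pow_atTop_nhds_zero_of_lt_one (r := (1 / 2 : ℝ)) (by norm_num)
      (by norm_num)).comp (tendsto_add_atTop_nat 1)).mul_const (2 : ℝ)
    simpa using this.const_mul (m : ℝ)
  obtain ⟨n, hn⟩ := (hlim.eventually (gt_mem_nhds (show 0 < min 1 (ε / 2) by positivity))).exists
  refine ⟨fun w => Complex.exp (- (m * Complex.logTaylor (n + 1) (-w))), ?_, fun w =>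
    Complex.exp_ne_zero _, ?_⟩
  · have : Differentiable ℂ (Complex.logTaylor (n + 1)) := by
      unfold Complex.logTaylor
      fun_prop
    fun_prop
  · intro w hw
    have hw1 : ‖-w‖ < 1 := by rw [norm_neg]; linarith
    have h1 := Complex.norm_log_sub_logTaylor_le n hw1
    have hne : (1 - w) ≠ 0 := by
      intro h
      have : w = 1 := by linear_combination -h
      rw [this] at hw
      norm_num at hw
    set L := Complex.log (1 + -w) - Complex.logTaylor (n + 1) (-w) with hL
    have hLb : ‖L‖ ≤ (1 / 2 : ℝ) ^ (n + 1) * 2 := by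
      refine h1.trans ?_
      rw [norm_neg]
      have h2 : (1 - ‖w‖)⁻¹ ≤ 2 := by
        rw [inv_le_comm₀ (by linarith) (by norm_num)]
        linarith
      have h3 : ‖w‖ ^ (n + 1) ≤ (1 / 2 : ℝ) ^ (n + 1) := by gcongr
      have h4 : 0 ≤ (1 - ‖w‖)⁻¹ := inv_nonneg.2 (by linarith)
      calc ‖w‖ ^ (n + 1) * (1 - ‖w‖)⁻¹ / (n + 1) ≤ ‖w‖ ^ (n + 1) * (1 - ‖w‖)⁻¹ := by
            apply div_le_self (by positivity)
            have : (0 : ℝ) ≤ n := by positivity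
            linarith
        _ ≤ _ := by gcongr
    have heq : (1 - w) ^ m * Complex.exp (- (m * Complex.logTaylor (n + 1) (-w))) =
        Complex.exp (m * L) := by
      have h5 : (m : ℂ) * L = m * Complex.log (1 - w) + - (m * Complex.logTaylor (n + 1) (-w)) := by
        rw [hL, ← sub_eq_add_neg 1 w]
        ring
      rw [h5, Complex.exp_add, Complex.exp_nat_mul, Complex.exp_log hne]
    rw [heq]
    have hmL : ‖(m : ℂ) * L‖ ≤ min 1 (ε / 2) := by
      rw [norm_mul, Complex.norm_natCast]
      exact le_trans (by gcongr) hn.le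
    have := Complex.norm_exp_sub_one_le (hmL.trans (min_le_left _ _))
    have := hmL.trans (min_le_right _ _)
    linarith


lemma hk_an {D : Set ℂ} (hD : IsOpen D) {f : ℂ → ℂ} (hf : DifferentiableOn ℂ f D) {z : ℂ}
    (hz : z ∈ D) : AnalyticAt ℂ f z := hf.analyticAt (hD.mem_nhds hz)

lemma hk_div {D : Set ℂ} (hD : IsOpen D) {F G : ℂ → ℂ} (hF : DifferentiableOn ℂ F D)
    (hG : DifferentiableOn ℂ G D) (ht : ∀ z ∈ D, analyticOrderAt G z ≠ ⊤)
    (hle : ∀ z ∈ D, analyticOrderAt G z ≤ analyticOrderAt F z) :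
    ∃ Q : ℂ → ℂ, DifferentiableOn ℂ Q D ∧ ∀ z ∈ D, F z = Q z * G z := by
  have key : ∀ z, ∃ q : ℂ → ℂ, z ∈ D → (AnalyticAt ℂ q z ∧ ∀ᶠ x in 𝓝 z, F x = q x * G x) := by
    intro z
    by_cases hz : z ∈ D
    swap
    · exact ⟨0, fun h => absurd h hz⟩
    obtain ⟨n, hn⟩ := ENat.ne_top_iff_exists.1 (ht z hz)
    obtain ⟨g, hg, hgz, hgG⟩ := (hk_an hD hG hz).analyticOrderAt_eq_natCast.1 hn.symm
    obtain ⟨p, hp, hpF⟩ := (natCast_le_analyticOrderAt (hk_an hD hF hz)).1 (hn ▸ hle z hz)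
    refine ⟨fun x => p x / g x, fun _ => ⟨hp.div hg hgz, ?_⟩⟩
    filter_upwards [hgG, hpF, hg.continuousAt.eventually_ne hgz] with x h1 h2 h3
    rw [h1, h2]
    simp only [smul_eq_mul]
    field_simp
  choose q hq using key
  refine ⟨fun z => q z z, ?_, fun z hz => (hq z hz).2.self_of_nhds⟩
  intro z hz
  refine DifferentiableAt.differentiableWithinAt ?_
  refine (hq z hz).1.differentiableAt.congr_of_eventuallyEq ?_
  have hne : ∀ᶠ x in 𝓝 z, x ≠ z → G x ≠ 0 := by
    rcases (hk_an hD hG hz).eventually_eq_zero_or_eventually_ne_zero with h | h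
    · exact absurd (analyticOrderAt_eq_top.2 h) (ht z hz)
    · exact eventually_nhdsWithin_iff.1 h
  filter_upwards [hne, (hq z hz).2, hD.mem_nhds hz] with x h1 h2 hx
  by_cases hxz : x = z
  · rw [hxz]
  · have h3 := (hq x hx).2.self_of_nhds
    exact mul_right_cancel₀ (h1 hxz) (h3.symm.trans h2)

lemma hk_weier {D : Set ℂ} (hD : IsOpen D) (m : ℂ → ℕ) (S : Set ℂ) (hSD : S ⊆ D)
    (hSc : S.Countable) (hS : ∀ K ⊆ D, IsCompact K → (S ∩ K).Finite)
    (hm : ∀ z ∈ D, z ∉ S → m z = 0) :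
    ∃ A : ℂ → ℂ, DifferentiableOn ℂ A D ∧ ∀ z ∈ D, analyticOrderAt A z = m z := by
  classical
  obtain ⟨w, e, hwe, hK⟩ := hk_exists_w hD
  obtain ⟨ε, hε, c, hc, -⟩ := hSc.exists_pos_hasSum_le (ε := 1) one_pos
  have hg : ∀ a : ℂ, ∃ g : ℂ → ℂ, Differentiable ℂ g ∧ (∀ w, g w ≠ 0) ∧
      ∀ w, ‖w‖ ≤ 1 / 2 → ‖(1 - w) ^ (m a) * g w - 1‖ ≤ ε a := fun a => hk_elem (m a) (hε a)
  choose g hgd hg0 hgε using hg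
  let f : S → ℂ → ℂ := fun i z => (1 - w i z) ^ (m i) * g i (w i z) - 1
  have hfd : ∀ i, DifferentiableOn ℂ (f i) D := by
    intro i
    have h1 := (hwe i (hSD i.2)).1
    have h2 : DifferentiableOn ℂ (fun z => g i (w i z)) D := (hgd i).comp_differentiableOn h1
    exact ((((differentiableOn_const _).sub h1).pow _).mul h2).sub (differentiableOn_const _)
  have hfb : ∀ K ⊆ D, IsCompact K → ∀ᶠ i : S in cofinite, ∀ z ∈ K, ‖f i z‖ ≤ ε i := by
    intro K hKD hKc
    obtain ⟨K', hK'D, hK'c, hK'⟩ := hK K hKD hKc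
    have hfin := hS K' hK'D hK'c
    have : {i : S | (i : ℂ) ∈ S ∩ K'}.Finite := hfin.preimage Subtype.val_injective.injOn
    filter_upwards [this.compl_mem_cofinite] with i hi z hz
    refine hgε _ _ (hK' i (hSD i.2) (fun h => hi ⟨i.2, h⟩) z hz)
  have hfne : ∀ i : S, ∀ z ∈ D, z ≠ i → 1 + f i z ≠ 0 := by
    intro i z hz hzi
    obtain ⟨h1, h2⟩ := (hwe i (hSD i.2)).2.2 z hz
    simp only [f, add_sub_cancel]
    rw [h2]
    exact mul_ne_zero (pow_ne_zero _ (mul_ne_zero (sub_ne_zero.2 hzi) h1)) (hg0 _ _)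
  obtain ⟨hA, hsum⟩ := hk_prod hD hc.summable hfd hfb
  refine ⟨_, hA, ?_⟩
  intro a ha
  by_cases haS : a ∈ S
  swap
  · rw [hm a ha haS, Nat.cast_zero, (hk_an hD hA ha).analyticOrderAt_eq_zero]
    refine tprod_one_add_ne_zero_of_summable (fun i => ?_) (hsum a ha)
    exact hfne i a ha (fun h => haS (h ▸ i.2))
  · let a' : S := ⟨a, haS⟩
    let f' : S → ℂ → ℂ := fun i z => if i = a' then 0 else f i z
    obtain ⟨hB, hsumB⟩ := hk_prod (f := f') hD hc.summable (fun i => by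
      by_cases h : i = a'
      · simp only [f', h, if_true]
        exact differentiableOn_const _
      · simp only [f', h, if_false]
        exact hfd i) (fun K hKD hKc => by
      filter_upwards [hfb K hKD hKc] with i hi z hz
      simp only [f']
      split_ifs
      · simpa using (hε i).le
      · exact hi z hz)
    rw [(hk_an hD hA ha).analyticOrderAt_eq_natCast]
    have hwa := hwe a ha
    have h2 : DifferentiableOn ℂ (fun z => g a (w a z)) D := (hgd a).comp_differentiableOn hwa.1
    refine ⟨fun z => e a z ^ (m a) * g a (w a z) * ∏' i, (1 + f' i z), ?_, ?_, ?_⟩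
    · exact hk_an hD (((hwa.2.1.pow _).mul h2).mul hB) ha
    · refine mul_ne_zero (mul_ne_zero (pow_ne_zero _ (hwa.2.2 a ha).1) (hg0 _ _)) ?_
      refine tprod_one_add_ne_zero_of_summable (fun i => ?_) (hsumB a ha)
      simp only [f']
      split_ifs with h
      · simp
      · exact hfne i a ha (fun h' => h (Subtype.ext h'.symm))
    · filter_upwards [hD.mem_nhds ha] with z hz
      have hmul : Multipliable (fun i => 1 + f' i z) := multipliable_one_add_of_summable (hsumB z hz)
      have hup : (fun i => 1 + f' i z) = Function.update (fun i => 1 + f i z) a' 1 := by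
        ext i
        simp only [f', Function.update_apply]
        split_ifs <;> simp
      rw [hup] at hmul
      rw [hmul.tprod_eq_mul_tprod_ite' a']
      have : ∀ i, (if i = a' then 1 else 1 + f i z) = 1 + f' i z := by
        intro i
        simp only [f']
        split_ifs <;> simp
      simp only [this]
      simp only [f, add_sub_cancel, smul_eq_mul, a']
      rw [(hwa.2.2 z hz).2, mul_pow]
      ring

lemma hk_jet {D : Set ℂ} (hD : IsOpen D) {a : ℂ} (ha : a ∈ D) {w e : ℂ → ℂ}
    (hw : DifferentiableOn ℂ w D) (he : DifferentiableOn ℂ e D)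
    (hwe : ∀ z ∈ D, e z ≠ 0 ∧ 1 - w z = (z - a) * e z) {φ : ℂ → ℂ} (hφ : AnalyticAt ℂ φ a)
    (m : ℕ) : ∀ ε : ℝ, 0 < ε → ∃ G : ℂ → ℂ, DifferentiableOn ℂ G D ∧
      (m : ℕ∞) ≤ analyticOrderAt (fun z => φ z - G z) a ∧
      ∀ z ∈ D, ‖w z‖ ≤ 1 / 2 → ‖G z / (1 - w z) ^ m‖ ≤ ε := by
  induction m with
  | zero =>
    intro ε hε
    exact ⟨fun _ => 0, differentiableOn_const _, by simp, fun z _ _ => by simpa using hε.le⟩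
  | succ m ih =>
    intro ε hε
    obtain ⟨G, hG, hord, hGb⟩ := ih (ε / 4) (by positivity)
    have hGa := hk_an hD hG ha
    obtain ⟨ψ, hψ, hψe⟩ := (natCast_le_analyticOrderAt (hφ.sub hGa)).1 hord
    set c := ψ a / e a ^ m with hc
    have hea := (hwe a ha).1
    have hwa : w a = 1 := by
      have := (hwe a ha).2
      rw [sub_self, zero_mul, sub_eq_zero] at this
      exact this.symm
    obtain ⟨k, hk⟩ : ∃ k : ℕ, ‖c‖ * (1 / 2 : ℝ) ^ k < ε / 4 := by
      have : Tendsto (fun k : ℕ => ‖c‖ * (1 / 2 : ℝ) ^ k) atTop (𝓝 0) := by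
        simpa using (tendsto_pow_atTop_nhds_zero_of_lt_one (r := (1 / 2 : ℝ)) (by norm_num)
          (by norm_num)).const_mul ‖c‖
      exact (this.eventually (gt_mem_nhds (by positivity))).exists
    have hG' : DifferentiableOn ℂ (fun z => G z + c * (1 - w z) ^ m * w z ^ k) D :=
      hG.add (((differentiableOn_const c).mul
        (((differentiableOn_const (1 : ℂ)).sub hw).pow m)).mul (hw.pow k))
    refine ⟨_, hG', ?_, ?_⟩
    · have hwan := hk_an hD hw ha
      have hean := hk_an hD he ha
      have hχ : AnalyticAt ℂ (fun z => ψ z - c * e z ^ m * w z ^ k) a :=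
        hψ.sub ((analyticAt_const.mul (hean.pow m)).mul (hwan.pow k))
      have hχ0 : ψ a - c * e a ^ m * w a ^ k = 0 := by
        rw [hwa, hc]
        field_simp
        simp
      have hχ1 : (1 : ℕ∞) ≤ analyticOrderAt (fun z => ψ z - c * e z ^ m * w z ^ k) a :=
        Order.one_le_iff_ne_zero.2 (hχ.analyticOrderAt_ne_zero.2 hχ0)
      obtain ⟨θ, hθ, hθe⟩ := (natCast_le_analyticOrderAt (n := 1) hχ).1 (by simpa using hχ1)
      refine (natCast_le_analyticOrderAt (hφ.sub (hk_an hD hG' ha))).2 ⟨θ, hθ, ?_⟩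
      filter_upwards [hψe, hθe, hD.mem_nhds ha] with z h1 h2 hz
      simp only [smul_eq_mul, pow_one] at h1 h2 ⊢
      simp only [Pi.sub_apply] at h1 ⊢
      rw [(hwe z hz).2, mul_pow]
      linear_combination h1 + (z - a) ^ m * h2
    · intro z hz hwz
      have ht : (1 / 2 : ℝ) ≤ ‖1 - w z‖ := by
        have := norm_sub_norm_le (1 : ℂ) (w z)
        rw [norm_one] at this
        linarith
      have hne : 1 - w z ≠ 0 := by
        rw [← norm_pos_iff]; linarith
      have heq : (G z + c * (1 - w z) ^ m * w z ^ k) / (1 - w z) ^ (m + 1) =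
          (G z / (1 - w z) ^ m + c * w z ^ k) / (1 - w z) := by
        field_simp
        ring
      rw [heq, norm_div, div_le_iff₀ (by linarith)]
      have h1 := hGb z hz hwz
      have h2 : ‖c * w z ^ k‖ ≤ ε / 4 := by
        rw [norm_mul, norm_pow]
        refine le_trans ?_ hk.le
        gcongr
      have h3 := norm_add_le (G z / (1 - w z) ^ m) (c * w z ^ k)
      nlinarith

lemma hk_bez {D : Set ℂ} (hD : IsOpen D) (S : Set ℂ) (hSD : S ⊆ D)
    (hSc : S.Countable) (hS : ∀ K ⊆ D, IsCompact K → (S ∩ K).Finite) {f b : ℂ → ℂ}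
    (hf : DifferentiableOn ℂ f D) (hb : DifferentiableOn ℂ b D)
    (hf0 : ∀ z ∈ D, z ∉ S → f z ≠ 0) (hft : ∀ z ∈ D, analyticOrderAt f z ≠ ⊤)
    (hbS : ∀ z ∈ S, b z ≠ 0) :
    ∃ v : ℂ → ℂ, DifferentiableOn ℂ v D ∧
      ∀ z ∈ D, analyticOrderAt f z ≤ analyticOrderAt (fun z => 1 - v z * b z) z := by
  classical
  obtain ⟨w, e, hwe, hK⟩ := hk_exists_w hD
  obtain ⟨ε, hε, c, hc, -⟩ := hSc.exists_pos_hasSum_le (ε := 1) one_pos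
  let m : ℂ → ℕ := fun z => analyticOrderNatAt f z
  have hm : ∀ z ∈ D, (m z : ℕ∞) = analyticOrderAt f z := fun z hz =>
    Nat.cast_analyticOrderNatAt (hft z hz)
  -- local factorization
  have hfac : ∀ a : ℂ, ∃ F : ℂ → ℂ, a ∈ S → DifferentiableOn ℂ F D ∧ F a ≠ 0 ∧
      ∀ z ∈ D, f z = F z * (z - a) ^ m a := by
    intro a
    by_cases haS : a ∈ S
    swap
    · exact ⟨0, fun h => absurd h haS⟩
    have ha := hSD haS
    have hmon : DifferentiableOn ℂ (fun z : ℂ => (z - a) ^ m a) D := by fun_prop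
    have hmona : analyticOrderAt (fun z : ℂ => (z - a) ^ m a) a = m a :=
      (hk_an hD hmon ha).analyticOrderAt_eq_natCast.2 ⟨fun _ => 1, analyticAt_const, one_ne_zero,
        Eventually.of_forall fun z => by simp⟩
    have hmonz : ∀ z ∈ D, z ≠ a → analyticOrderAt (fun z : ℂ => (z - a) ^ m a) z = 0 := by
      intro z hz hza
      rw [(hk_an hD hmon hz).analyticOrderAt_eq_zero]
      exact pow_ne_zero _ (sub_ne_zero.2 hza)
    obtain ⟨Q, hQ, hQf⟩ := hk_div hD hf hmon (by
      intro z hz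
      by_cases h : z = a
      · rw [h, hmona]; simp
      · rw [hmonz z hz h]; simp) (by
      intro z hz
      by_cases h : z = a
      · rw [h, hmona, hm a ha]
      · rw [hmonz z hz h]; simp)
    refine ⟨Q, fun _ => ⟨hQ, ?_, hQf⟩⟩
    have h1 : analyticOrderAt f a = analyticOrderAt (Q * fun z : ℂ => (z - a) ^ m a) a := by
      apply analyticOrderAt_congr
      filter_upwards [hD.mem_nhds ha] with z hz using hQf z hz
    rw [analyticOrderAt_mul (hk_an hD hQ ha) (hk_an hD hmon ha), hmona, ← hm a ha] at h1
    have h2 : analyticOrderAt Q a = 0 := by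
      have h3 : (0 : ℕ∞) + m a = analyticOrderAt Q a + m a := by rw [zero_add]; exact h1
      exact ((ENat.add_left_injective_of_ne_top (ENat.natCast_ne_top (m a))) h3).symm
    exact (hk_an hD hQ ha).analyticOrderAt_eq_zero.1 h2
  choose F hF using hfac
  have hjet : ∀ a : ℂ, ∃ G : ℂ → ℂ, a ∈ S → DifferentiableOn ℂ G D ∧
      (m a : ℕ∞) ≤ analyticOrderAt (fun z => e a z ^ m a / (F a z * b z) - G z) a ∧
      ∀ z ∈ D, ‖w a z‖ ≤ 1 / 2 → ‖G z / (1 - w a z) ^ m a‖ ≤ ε a := by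
    intro a
    by_cases haS : a ∈ S
    swap
    · exact ⟨0, fun h => absurd h haS⟩
    have ha := hSD haS
    obtain ⟨h1, h2, h3⟩ := hwe a ha
    obtain ⟨G, hG⟩ := hk_jet hD ha h1 h2 h3 (φ := fun z => e a z ^ m a / (F a z * b z))
      (((hk_an hD h2 ha).pow _).div ((hk_an hD (hF a haS).1 ha).mul (hk_an hD hb ha))
        (mul_ne_zero (hF a haS).2.1 (hbS a haS))) (m a) (ε a) (hε a)
    exact ⟨G, fun _ => hG⟩
  choose G hG using hjet
  let V : S → ℂ → ℂ := fun i z => F i z / e i z ^ m i * G i z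
  have hVd : ∀ i, DifferentiableOn ℂ (V i) D := fun i =>
    ((hF i i.2).1.div ((hwe i (hSD i.2)).2.1.pow _)
      (fun z hz => pow_ne_zero _ ((hwe i (hSD i.2)).2.2 z hz).1)).mul (hG i i.2).1
  have hVe : ∀ i : S, ∀ z ∈ D, z ≠ i → V i z = f z * (G i z / (1 - w i z) ^ m i) := by
    intro i z hz hzi
    obtain ⟨h1, h2⟩ := (hwe i (hSD i.2)).2.2 z hz
    have h3 := sub_ne_zero.2 hzi
    simp only [V]
    rw [h2, (hF i i.2).2.2 z hz, mul_pow]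
    field_simp
  have hbd : ∀ K ⊆ D, IsCompact K → ∀ᶠ i : S in cofinite, ∀ z ∈ K, z ≠ i ∧
      ‖G i z / (1 - w i z) ^ m i‖ ≤ ε i := by
    intro K hKD hKc
    obtain ⟨K', hK'D, hK'c, hK'⟩ := hK K hKD hKc
    have hfin := hS K' hK'D hK'c
    have : {i : S | (i : ℂ) ∈ S ∩ K'}.Finite := hfin.preimage Subtype.val_injective.injOn
    filter_upwards [this.compl_mem_cofinite] with i hi z hz
    have h1 := hK' i (hSD i.2) (fun h => hi ⟨i.2, h⟩) z hz
    refine ⟨?_, (hG i i.2).2.2 z (hKD hz) h1⟩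
    intro h
    have h2 := ((hwe i (hSD i.2)).2.2 z (hKD hz)).2
    rw [h, sub_self, zero_mul, sub_eq_zero] at h2
    rw [h, ← h2] at h1
    norm_num at h1
  obtain ⟨hv, hvs⟩ := hk_sum hD hc.summable hVd (by
    intro K hKD hKc
    obtain ⟨C, hC⟩ := hKc.exists_bound_of_continuousOn (hf.continuousOn.mono hKD)
    refine ⟨C, ?_⟩
    filter_upwards [hbd K hKD hKc] with i hi z hz
    rw [hVe i z (hKD hz) (hi z hz).1, norm_mul]
    have h1 := hC z hz
    have h2 := (hi z hz).2
    gcongr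
    exact (norm_nonneg _).trans h1)
  refine ⟨_, hv, ?_⟩
  intro a ha
  by_cases haS : a ∈ S
  swap
  · rw [(hk_an hD hf ha).analyticOrderAt_eq_zero.2 (hf0 a ha haS)]
    simp
  let a' : S := ⟨a, haS⟩
  obtain ⟨U, hUo, hUD, haU, hUS⟩ : ∃ U : Set ℂ, IsOpen U ∧ U ⊆ D ∧ a ∈ U ∧
      ∀ z ∈ U, z ∈ S → z = a := by
    obtain ⟨r, hr, hrD⟩ := nhds_basis_closedBall.mem_iff.1 (hD.mem_nhds ha)
    have hfin := (hS _ hrD (isCompact_closedBall _ _)).sdiff (t := {a})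
    refine ⟨ball a r \ ((S ∩ closedBall a r) \ {a}), isOpen_ball.sdiff hfin.isClosed,
      sdiff_subset.trans (ball_subset_closedBall.trans hrD), ⟨mem_ball_self hr, by simp⟩, ?_⟩
    rintro z ⟨hz1, hz2⟩ hzS
    by_contra hne
    exact hz2 ⟨⟨hzS, ball_subset_closedBall hz1⟩, hne⟩
  let h' : S → ℂ → ℂ := fun i z => if i = a' then 0 else G i z / (1 - w i z) ^ m i
  have hUne : ∀ i : S, i ≠ a' → ∀ z ∈ U, z ≠ i := by
    intro i hi z hz hzi
    apply hi
    have : z = a := hUS z hz (hzi ▸ i.2)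
    exact Subtype.ext (hzi.symm.trans this)
  obtain ⟨hH, hHs⟩ := hk_sum (f := h') hUo hc.summable (fun i => by
    by_cases h : i = a'
    · simp only [h', h, if_true]
      exact differentiableOn_const _
    · simp only [h', h, if_false]
      refine DifferentiableOn.div ((hG i i.2).1.mono hUD)
        (((differentiableOn_const _).sub ((hwe i (hSD i.2)).1.mono hUD)).pow _) ?_
      intro z hz
      obtain ⟨h1, h2⟩ := (hwe i (hSD i.2)).2.2 z (hUD hz)
      rw [h2]
      exact pow_ne_zero _ (mul_ne_zero (sub_ne_zero.2 (hUne i h z hz)) h1)) (by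
    intro K hKU hKc
    refine ⟨1, ?_⟩
    filter_upwards [hbd K (hKU.trans hUD) hKc] with i hi z hz
    rw [one_mul]
    simp only [h']
    split_ifs
    · simpa using (hε i).le
    · exact (hi z hz).2)
  have heq : (fun z => 1 - (∑' i, V i z) * b z) =ᶠ[𝓝 a]
      ((fun z => F a z * b z / e a z ^ m a) * (fun z => e a z ^ m a / (F a z * b z) - G a z)) -
        f * (fun z => (∑' i, h' i z) * b z) := by
    have hn : ∀ᶠ z in 𝓝 a, F a z * b z ≠ 0 :=
      ((hk_an hD (hF a haS).1 ha).mul (hk_an hD hb ha)).continuousAt.eventually_ne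
        (mul_ne_zero (hF a haS).2.1 (hbS a haS))
    filter_upwards [hUo.mem_nhds haU, hn] with z hz hnz
    have hzD := hUD hz
    have he0 := ((hwe a ha).2.2 z hzD).1
    rw [(hvs z hzD).tsum_eq_add_tsum_ite a']
    have : ∀ i, (if i = a' then 0 else V i z) = f z * h' i z := by
      intro i
      simp only [h']
      split_ifs with hi
      · simp
      · exact hVe i z hzD (hUne i hi z hz)
    simp only [this, tsum_mul_left]
    simp only [V, a', Pi.sub_apply, Pi.mul_apply]
    have := left_ne_zero_of_mul hnz
    have := right_ne_zero_of_mul hnz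
    field_simp
    ring
  rw [analyticOrderAt_congr heq]
  refine le_trans (le_min ?_ ?_) le_analyticOrderAt_sub
  · have hean := hk_an hD (hwe a ha).2.1 ha
    have hFa := hk_an hD (hF a haS).1 ha
    have hba := hk_an hD hb ha
    rw [analyticOrderAt_mul]
    · rw [← hm a ha]
      exact (hG a haS).2.1.trans le_add_self
    · exact (hFa.mul hba).div (hean.pow _) (pow_ne_zero _ ((hwe a ha).2.2 a ha).1)
    · exact ((hean.pow _).div (hFa.mul hba) (mul_ne_zero (hF a haS).2.1 (hbS a haS))).sub
        (hk_an hD (hG a haS).1 ha)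
  · have hHb : AnalyticAt ℂ (fun z => (∑' i, h' i z) * b z) a :=
      (hk_an hUo hH haU).mul (hk_an hD hb ha)
    rw [analyticOrderAt_mul (hk_an hD hf ha) hHb]
    exact le_self_add


lemma hk_countable {D : Set ℂ} (hD : IsOpen D) {S : Set ℂ} (hSD : S ⊆ D)
    (hS : ∀ K ⊆ D, IsCompact K → (S ∩ K).Finite) : S.Countable := by
  have key : ∀ z : ℂ, ∃ t : Set ℂ, z ∈ S → t ∈ 𝓝[S] z ∧ (S ∩ t).Finite := by
    intro z
    by_cases hz : z ∈ S
    swap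
    · exact ⟨∅, fun h => absurd h hz⟩
    obtain ⟨r, hr, hrD⟩ := nhds_basis_closedBall.mem_iff.1 (hD.mem_nhds (hSD hz))
    exact ⟨closedBall z r, fun _ => ⟨mem_nhdsWithin_of_mem_nhds (closedBall_mem_nhds z hr),
      hS _ hrD (isCompact_closedBall _ _)⟩⟩
  choose t ht using key
  obtain ⟨T, hTS, hTc, hT⟩ := TopologicalSpace.countable_cover_nhdsWithin
    (s := S) (f := t) (fun z hz => (ht z hz).1)
  have : S ⊆ ⋃ z ∈ T, S ∩ t z := by
    intro z hz
    have := hT hz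
    simp only [mem_iUnion] at this ⊢
    obtain ⟨i, hi, h⟩ := this
    exact ⟨i, hi, hz, h⟩
  exact (hTc.biUnion fun z hz => (ht z (hTS hz)).2.countable).mono this

lemma hk_locfin {D : Set ℂ} (hD : IsOpen D) {f : ℂ → ℂ} (hf : DifferentiableOn ℂ f D)
    (hft : ∀ z ∈ D, analyticOrderAt f z ≠ ⊤) :
    ∀ K ⊆ D, IsCompact K → ({z | z ∈ D ∧ f z = 0} ∩ K).Finite := by
  intro K hKD hK
  by_contra hinf
  obtain ⟨x, hxK, hx⟩ := Set.Infinite.exists_accPt_of_subset_isCompact hinf hK inter_subset_right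
  rcases (hk_an hD hf (hKD hxK)).eventually_eq_zero_or_eventually_ne_zero with h | h
  · exact hft x (hKD hxK) (analyticOrderAt_eq_top.2 h)
  · rw [accPt_iff_frequently_nhdsNE] at hx
    obtain ⟨y, hy1, hy2⟩ := (hx.and_eventually h).exists
    exact hy2 hy1.1.2

noncomputable def hkE {D : Set ℂ} (f : Hol D) : ℂ → ℂ := Classical.choose f.2

lemma hkE_diff {D : Set ℂ} (f : Hol D) : DifferentiableOn ℂ (hkE f) D :=
  (Classical.choose_spec f.2).1

lemma hkE_eq {D : Set ℂ} (f : Hol D) (z : D) : hkE f z = (f : D → ℂ) z :=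
  (Classical.choose_spec f.2).2 z

def hkMk {D : Set ℂ} (F : ℂ → ℂ) (hF : DifferentiableOn ℂ F D) : Hol D :=
  ⟨fun z => F z, F, hF, fun _ => rfl⟩

noncomputable def hkO {D : Set ℂ} (f : Hol D) (z : D) : ℕ∞ := analyticOrderAt (hkE f) z

lemma hkO_of {D : Set ℂ} (hD : IsOpen D) (f : Hol D) (F : ℂ → ℂ)
    (h : ∀ z : D, (f : D → ℂ) z = F z) (z : D) : hkO f z = analyticOrderAt F z := by
  apply analyticOrderAt_congr
  filter_upwards [hD.mem_nhds z.2] with x hx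
  rw [hkE_eq f ⟨x, hx⟩, h]

lemma hkO_mul {D : Set ℂ} (hD : IsOpen D) (f g : Hol D) (z : D) :
    hkO (f * g) z = hkO f z + hkO g z := by
  rw [hkO_of hD (f * g) (hkE f * hkE g) (fun z => by simp [hkE_eq]),
    analyticOrderAt_mul (hk_an hD (hkE_diff f) z.2) (hk_an hD (hkE_diff g) z.2)]
  rfl

lemma hkO_pow {D : Set ℂ} (hD : IsOpen D) (f : Hol D) (n : ℕ) (z : D) :
    hkO (f ^ n) z = n • hkO f z := by
  rw [hkO_of hD (f ^ n) (hkE f ^ n) (fun z => by simp [hkE_eq]),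
    analyticOrderAt_pow (hk_an hD (hkE_diff f) z.2)]
  rfl

lemma hkO_ne_zero {D : Set ℂ} (hD : IsOpen D) (f : Hol D) (z : D) :
    hkO f z ≠ 0 ↔ (f : D → ℂ) z = 0 := by
  rw [hkO, (hk_an hD (hkE_diff f) z.2).analyticOrderAt_ne_zero, hkE_eq]

lemma hkO_zero {D : Set ℂ} (hD : IsOpen D) (z : D) : hkO (0 : Hol D) z = ⊤ := by
  rw [hkO_of hD 0 (fun _ => 0) (fun z => by simp), analyticOrderAt_eq_top]
  simp

lemma hkO_ne_top {D : Set ℂ} (hD : IsOpen D) (hc : IsConnected D) {f : Hol D} (hf : f ≠ 0)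
    (z : D) : hkO f z ≠ ⊤ := by
  intro h
  apply hf
  ext x
  have han : AnalyticOnNhd ℂ (hkE f) D := fun y hy => hk_an hD (hkE_diff f) hy
  have := han.eqOn_zero_of_preconnected_of_eventuallyEq_zero hc.isPreconnected z.2
    (analyticOrderAt_eq_top.1 h) x.2
  rw [hkE_eq] at this
  simpa using this

lemma hk_dvd {D : Set ℂ} (hD : IsOpen D) (hc : IsConnected D) {f g : Hol D} (hg : g ≠ 0)
    (h : ∀ z, hkO g z ≤ hkO f z) : ∃ q, f = q * g := by
  obtain ⟨Q, hQ, hQf⟩ := hk_div hD (hkE_diff f) (hkE_diff g)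
    (fun z hz => hkO_ne_top hD hc hg ⟨z, hz⟩) (fun z hz => h ⟨z, hz⟩)
  refine ⟨hkMk Q hQ, ?_⟩
  ext z
  have := hQf z z.2
  rw [hkE_eq, hkE_eq] at this
  simpa [hkMk] using this

lemma hk_weierH {D : Set ℂ} (hD : IsOpen D) (hc : IsConnected D) {f : Hol D} (hf : f ≠ 0)
    (n : D → ℕ) (hn : ∀ z, n z ≠ 0 → (f : D → ℂ) z = 0) :
    ∃ g : Hol D, g ≠ 0 ∧ ∀ z, hkO g z = n z := by
  classical
  have hlf := hk_locfin hD (hkE_diff f) (fun z hz => hkO_ne_top hD hc hf ⟨z, hz⟩)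
  have hsub : {z | z ∈ D ∧ hkE f z = 0} ⊆ D := fun z hz => hz.1
  obtain ⟨A, hA, hAo⟩ := hk_weier hD (fun z => if h : z ∈ D then n ⟨z, h⟩ else 0)
    {z | z ∈ D ∧ hkE f z = 0} hsub (hk_countable hD hsub hlf) hlf (by
      intro z hz hzS
      simp only [hz, dif_pos]
      by_contra hne
      exact hzS ⟨hz, by rw [hkE_eq f ⟨z, hz⟩]; exact hn _ hne⟩)
  have key : ∀ z, hkO (hkMk A hA) z = n z := by
    intro z
    rw [hkO_of hD (hkMk A hA) A (fun _ => rfl), hAo z z.2]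
    simp
  refine ⟨hkMk A hA, ?_, key⟩
  intro h0
  obtain ⟨z, hz⟩ := hc.nonempty
  have := key ⟨z, hz⟩
  rw [h0, hkO_zero hD] at this
  exact ENat.top_ne_natCast _ this

lemma hk_bezH {D : Set ℂ} (hD : IsOpen D) (hc : IsConnected D) {f g : Hol D} (hf : f ≠ 0)
    (h : ∀ z, (f : D → ℂ) z = 0 → (g : D → ℂ) z ≠ 0) :
    ∃ u v : Hol D, u * f + v * g = 1 := by
  have ht : ∀ z ∈ D, analyticOrderAt (hkE f) z ≠ ⊤ := fun z hz => hkO_ne_top hD hc hf ⟨z, hz⟩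
  have hlf := hk_locfin hD (hkE_diff f) ht
  have hsub : {z | z ∈ D ∧ hkE f z = 0} ⊆ D := fun z hz => hz.1
  obtain ⟨v, hv, hvo⟩ := hk_bez hD _ hsub (hk_countable hD hsub hlf) hlf (hkE_diff f) (hkE_diff g)
    (fun z hz hzS h0 => hzS ⟨hz, h0⟩) ht (by
      rintro z ⟨hz, h0⟩
      rw [hkE_eq g ⟨z, hz⟩]
      rw [hkE_eq f ⟨z, hz⟩] at h0
      exact h _ h0)
  obtain ⟨u, hu⟩ := hk_dvd hD hc (f := 1 - hkMk v hv * g) hf (by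
    intro z
    rw [hkO_of hD (1 - hkMk v hv * g) (fun z => 1 - v z * hkE g z)
      (fun z => by simp [hkMk, hkE_eq])]
    exact hvo z z.2)
  exact ⟨u, hkMk v hv, by rw [← hu]; ring⟩

lemma hk_zero {D : Set ℂ} (hD : IsOpen D) (hc : IsConnected D) {M : Ideal (Hol D)}
    (hM : M ≠ ⊤) {d : Hol D} (hd : d ∈ M) : ∃ z, (d : D → ℂ) z = 0 := by
  by_contra! hcon
  have hd0 : d ≠ 0 := by
    rintro rfl
    obtain ⟨z, hz⟩ := hc.nonempty
    exact hcon ⟨z, hz⟩ (by simp)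
  obtain ⟨u, hu⟩ := hk_dvd hD hc (f := 1) hd0 (fun z => by
    have : hkO d z = 0 := by
      by_contra h
      exact hcon z ((hkO_ne_zero hD d z).1 h)
    rw [this]; simp)
  exact hM ((Ideal.eq_top_iff_one M).2 (hu ▸ M.mul_mem_left u hd))

lemma hk_gcd {D : Set ℂ} (hD : IsOpen D) (hc : IsConnected D) {M : Ideal (Hol D)}
    {f g : Hol D} (hf : f ∈ M) (hg : g ∈ M) : ∃ d ∈ M, d ∣ f ∧ d ∣ g := by
  by_cases hf0 : f = 0
  · exact ⟨g, hg, by simp [hf0], dvd_rfl⟩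
  by_cases hg0 : g = 0
  · exact ⟨f, hf, dvd_rfl, by simp [hg0]⟩
  have hmin : ∀ z, min (hkO f z) (hkO g z) ≠ ⊤ := fun z h =>
    hkO_ne_top hD hc hf0 z (min_eq_top.1 h).1
  obtain ⟨d, hd0, hd⟩ := hk_weierH hD hc hf0 (fun z => (min (hkO f z) (hkO g z)).toNat) (by
    intro z hz
    rw [← hkO_ne_zero hD]
    intro h
    simp [h] at hz)
  simp only [ENat.natCast_toNat (hmin _)] at hd
  obtain ⟨a, ha⟩ := hk_dvd hD hc (f := f) hd0 (fun z => by rw [hd]; exact min_le_left _ _)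
  obtain ⟨b, hb⟩ := hk_dvd hD hc (f := g) hd0 (fun z => by rw [hd]; exact min_le_right _ _)
  have ha0 : a ≠ 0 := by rintro rfl; exact hf0 (by rw [ha, zero_mul])
  obtain ⟨u, v, huv⟩ := hk_bezH hD hc (g := b) ha0 (by
    intro z h1 h2
    rw [← hkO_ne_zero hD] at h1 h2
    have h3 : hkO f z = hkO a z + hkO d z := by rw [← hkO_mul hD, ← ha]
    have h4 : hkO g z = hkO b z + hkO d z := by rw [← hkO_mul hD, ← hb]
    have h5 := hd z
    rw [← Order.one_le_iff_ne_zero] at h1 h2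
    have h6 : hkO d z + 1 ≤ hkO d z := by
      conv_rhs => rw [h5]
      refine le_min ?_ ?_
      · rw [h3, add_comm]; gcongr
      · rw [h4, add_comm]; gcongr
    exact absurd h6 (not_le.2 (ENat.lt_add_one_iff (hkO_ne_top hD hc hd0 z) |>.2 le_rfl)))
  refine ⟨d, ?_, ⟨a, by rw [ha, mul_comm]⟩, ⟨b, by rw [hb, mul_comm]⟩⟩
  have : d = u * f + v * g := by
    calc d = (u * a + v * b) * d := by rw [huv, one_mul]
      _ = u * (a * d) + v * (b * d) := by ring
      _ = _ := by rw [← ha, ← hb]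
  rw [this]
  exact M.add_mem (M.mul_mem_left _ hf) (M.mul_mem_left _ hg)

lemma hk_pow {D : Set ℂ} (hD : IsOpen D) (hc : IsConnected D) {M : Ideal (Hol D)} (n : ℕ) :
    ∀ f ∈ M ^ n, ∃ d ∈ M, d ^ n ∣ f := by
  induction n with
  | zero => exact fun f _ => ⟨0, M.zero_mem, by simp⟩
  | succ n ih =>
    intro f hf
    rw [pow_succ] at hf
    refine Submodule.mul_induction_on hf ?_ ?_
    · intro y hy x hx
      obtain ⟨d, hd, hdy⟩ := ih y hy
      obtain ⟨d', hd', h1, h2⟩ := hk_gcd hD hc hd hx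
      exact ⟨d', hd', by
        rw [pow_succ]
        exact mul_dvd_mul ((pow_dvd_pow_of_dvd h1 n).trans hdy) h2⟩
    · rintro x y ⟨d, hd, hdx⟩ ⟨d', hd', hdy⟩
      obtain ⟨d'', hd'', h1, h2⟩ := hk_gcd hD hc hd hd'
      exact ⟨d'', hd'', dvd_add ((pow_dvd_pow_of_dvd h1 _).trans hdx)
        ((pow_dvd_pow_of_dvd h2 _).trans hdy)⟩

lemma hk_ordGE {D : Set ℂ} (hD : IsOpen D) (f : Hol D) (ζ : D) (n : ℕ) (h : ordGE f ζ n) :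
    (n : ℕ∞) ≤ hkO f ζ := by
  obtain ⟨g, hg⟩ := h
  refine (natCast_le_analyticOrderAt (hk_an hD (hkE_diff f) ζ.2)).2
    ⟨hkE g, hk_an hD (hkE_diff g) ζ.2, ?_⟩
  filter_upwards [hD.mem_nhds ζ.2] with x hx
  rw [hkE_eq f ⟨x, hx⟩, hkE_eq g ⟨x, hx⟩, hg, smul_eq_mul]

theorem ki_eq_henriksen {D : Set ℂ} (hD : IsOpen D) (hDconn : IsConnected D)
    (M : Ideal (Hol D)) (hM : M.IsMaximal)
    (hfree : (⋂ g ∈ M, ZD g) = (∅ : Set D)) :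
    ∀ f : Hol D,
      f ∈ ki M ↔ (f ∈ M ∧ ∀ d q : Hol D, d ∉ M → f = q * d → oInf q) := by
  intro f
  have hprime := hM.isPrime
  have hki : ∀ g : Hol D, g ∈ ki M ↔ ∀ n, 1 ≤ n → g ∈ M ^ n := by
    intro g
    simp [ki, Submodule.mem_iInf]
  have hcommon : ∀ x ∈ M, ∀ y ∈ M, ∃ z : D, (x : D → ℂ) z = 0 ∧ (y : D → ℂ) z = 0 := by
    intro x hx y hy
    obtain ⟨d, hd, ⟨a, ha⟩, ⟨b, hb⟩⟩ := hk_gcd hD hDconn hx hy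
    obtain ⟨z, hz⟩ := hk_zero hD hDconn hM.ne_top hd
    exact ⟨z, by simp [ha, hz], by simp [hb, hz]⟩
  rw [hki]
  constructor
  · intro hf
    refine ⟨by simpa using hf 1 le_rfl, ?_⟩
    intro d q hd hfq
    refine Or.inr fun n => ?_
    have hq : q ∈ M ^ (n + 1) := by
      have h1 : Ideal.span {d} ⊔ M ^ (n + 1) = ⊤ := by
        apply Ideal.sup_pow_eq_top
        by_contra hne
        have hle : M ≤ Ideal.span {d} ⊔ M := le_sup_right
        have := hM.eq_of_le hne hle
        apply hd
        rw [this]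
        exact Ideal.mem_sup_left (Ideal.mem_span_singleton_self d)
      have h2 : (1 : Hol D) ∈ Ideal.span {d} ⊔ M ^ (n + 1) := by rw [h1]; trivial
      obtain ⟨x, hx, y, hy, hxy⟩ := Submodule.mem_sup.1 h2
      obtain ⟨a, rfl⟩ := Ideal.mem_span_singleton'.1 hx
      have : q = a * f + q * y := by
        rw [hfq]
        linear_combination (-q) * hxy
      rw [this]
      exact Ideal.add_mem _ (Ideal.mul_mem_left _ _ (hf _ (by omega))) (Ideal.mul_mem_left _ _ hy)
    obtain ⟨d', hd', c, hc⟩ := hk_pow hD hDconn (n + 1) q hq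
    obtain ⟨ζ, hζ⟩ := hk_zero hD hDconn hM.ne_top hd'
    refine ⟨ζ, by simp [ZD, hc, hζ], ?_⟩
    have hlin : DifferentiableOn ℂ (fun z : ℂ => z - ζ) D := by fun_prop
    set l : Hol D := hkMk _ hlin with hl
    have hlo : ∀ z, hkO l z ≤ hkO d' z := by
      intro z
      rw [hkO_of hD l (fun z => z - ζ) (fun _ => rfl)]
      by_cases h : z = ζ
      · subst h
        have : analyticOrderAt (fun x : ℂ => x - z) z = (1 : ℕ) :=
          (hk_an hD hlin z.2).analyticOrderAt_eq_natCast.2 ⟨fun _ => 1, analyticAt_const,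
            one_ne_zero, Eventually.of_forall fun x => by simp⟩
        rw [this, Nat.cast_one, Order.one_le_iff_ne_zero, hkO_ne_zero hD]
        exact hζ
      · rw [(hk_an hD hlin z.2).analyticOrderAt_eq_zero.2
          (sub_ne_zero.2 fun h' => h (Subtype.ext h'))]
        simp
    by_cases hl0 : l = 0
    · have hd0 : d' = 0 := by
        by_contra hne
        have := hlo ζ
        rw [hl0, hkO_zero hD, top_le_iff] at this
        exact hkO_ne_top hD hDconn hne ζ this
      refine ⟨0, fun z => ?_⟩
      rw [hc, hd0]
      simp
    · obtain ⟨p, hp⟩ := hk_dvd hD hDconn hl0 hlo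
      refine ⟨p ^ (n + 1) * l * c, fun z => ?_⟩
      rw [hc, hp]
      simp [hl, hkMk, mul_pow]
      ring
  · rintro ⟨hfM, hfd⟩ n hn
    classical
    by_cases hf0 : f = 0
    · rw [hf0]; exact Ideal.zero_mem _
    have hft := fun z => hkO_ne_top hD hDconn hf0 z
    obtain ⟨d, hd0, hd⟩ := hk_weierH hD hDconn hf0
      (fun z => if hkO f z < n then (hkO f z).toNat else 0) (by
        intro z hz
        rw [← hkO_ne_zero hD]
        intro h
        simp [h] at hz)
    have hdle : ∀ z, hkO d z ≤ hkO f z := by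
      intro z
      rw [hd]
      split_ifs
      · rw [ENat.natCast_toNat (hft z)]
      · simp
    obtain ⟨q, hq⟩ := hk_dvd hD hDconn hd0 hdle
    have hq0 : q ≠ 0 := by rintro rfl; exact hf0 (by rw [hq, zero_mul])
    have hfo : ∀ z, hkO f z = hkO q z + hkO d z := fun z => by rw [← hkO_mul hD, ← hq]
    have hn0 : (n : ℕ∞) ≠ 0 := by exact_mod_cast (by omega : n ≠ 0)
    have hdlt : ∀ z, hkO d z < n := by
      intro z
      rw [hd]
      split_ifs with h
      · rwa [ENat.natCast_toNat (hft z)]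
      · simpa using pos_iff_ne_zero.2 hn0
    have hqo : ∀ z, hkO q z ≠ 0 → hkO d z = 0 ∧ (n : ℕ∞) ≤ hkO q z := by
      intro z hz
      have h1 := hd z
      split_ifs at h1 with h
      · rw [ENat.natCast_toNat (hft z)] at h1
        have h2 := hfo z
        rw [h1] at h2
        have h3 : (0 : ℕ∞) + hkO f z = hkO q z + hkO f z := by rw [zero_add]; exact h2
        exact absurd ((ENat.add_left_injective_of_ne_top (hft z)) h3).symm hz
      · have h2 := hfo z
        simp only [Nat.cast_zero] at h1
        rw [h1, add_zero] at h2
        exact ⟨h1, by rw [← h2]; exact not_lt.1 h⟩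
    have hdM : d ∉ M := by
      intro hdM
      have hqM : q ∉ M := by
        intro hqM
        obtain ⟨z, h1, h2⟩ := hcommon q hqM d hdM
        rw [← hkO_ne_zero hD] at h1 h2
        exact h2 (hqo z h1).1
      rcases hfd q d hqM (by rw [hq, mul_comm]) with h | h
      · exact hd0 h
      · obtain ⟨ζ, -, h2⟩ := h n
        exact absurd (hk_ordGE hD d ζ n h2) (not_le.2 (hdlt ζ))
    have hqM : q ∈ M := by
      rw [hq] at hfM
      exact (hprime.mem_or_mem hfM).resolve_right hdM
    obtain ⟨p, hp0, hp⟩ := hk_weierH hD hDconn hq0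
      (fun z => if hkO q z = 0 then 0 else 1) (by
        intro z hz
        rw [← hkO_ne_zero hD]
        intro h
        simp [h] at hz)
    have hpM : p ∈ M := by
      by_contra hpM
      obtain ⟨y, i, hi, hyi⟩ := hM.exists_inv hpM
      obtain ⟨z, h1, h2⟩ := hcommon q hqM i hi
      have hpz : (p : D → ℂ) z = 0 := by
        rw [← hkO_ne_zero hD, hp z, if_neg ((hkO_ne_zero hD q z).2 h1)]
        simp
      have := congrArg (fun g : Hol D => (g : D → ℂ) z) hyi
      simp [hpz, h2] at this
    have hpo : ∀ z, hkO (p ^ n) z ≤ hkO q z := by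
      intro z
      rw [hkO_pow hD, hp]
      split_ifs with h
      · simp
      · simpa using (hqo z h).2
    have hpn0 : p ^ n ≠ 0 := by
      intro h
      obtain ⟨z, hz⟩ := hDconn.nonempty
      have := hpo ⟨z, hz⟩
      rw [h, hkO_zero hD, top_le_iff] at this
      exact hkO_ne_top hD hDconn hq0 _ this
    obtain ⟨r, hr⟩ := hk_dvd hD hDconn hpn0 hpo
    rw [hq, hr]
    exact Ideal.mul_mem_right _ _ (Ideal.mul_mem_left _ _ (Ideal.pow_mem_pow hpM n))
end

section
/- Let D be a domain in ℂ and let M be a free maximal ideal of H(D). Then ki(M) := ⋂_{n=1}^∞ Mⁿ is a prime ideal of H(D) that is contained in M and is not maximal (in particular ki(M) ⊊ M), and moreover it is the largest non-maximal prime ideal contained in M: every prime ideal P of H(D) with ki(M) ⊆ P ⊆ M satisfies P = ki(M) or P = M. -/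
set_option synthInstance.maxHeartbeats 400000
set_option maxHeartbeats 800000

namespace KiProof

open Filter Topology Set

/-! ### Pure algebra -/

theorem alg {R : Type*} [CommRing R] [IsDomain R] (M : Ideal R) (hM : M.IsMaximal) (p : R)
    (hpM : p ∈ M) (hp0 : p ≠ 0) (hp : ∀ u ∈ M, ∃ s, s ∉ M ∧ p ∣ s * u) :
    (ki M).IsPrime ∧ ki M ≤ M ∧ ¬ (ki M).IsMaximal ∧ ki M ≠ M ∧
      ∀ P : Ideal R, P.IsPrime → ki M ≤ P → P ≤ M → P = ki M ∨ P = M := by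
  have hprime : M.IsPrime := hM.isPrime
  have hmem : ∀ x, x ∈ ki M ↔ ∀ n : ℕ, 1 ≤ n → x ∈ M ^ n := by
    intro x; simp [ki, Submodule.mem_iInf]
  have hL : ∀ n : ℕ, ∀ x ∈ M ^ n, ∃ s, s ∉ M ∧ p ^ n ∣ s * x := by
    intro n
    induction n with
    | zero =>
      intro x _
      exact ⟨1, fun h => hprime.ne_top ((Ideal.eq_top_iff_one M).2 h), by simp⟩
    | succ n ih =>
      intro x hx
      rw [pow_succ] at hx
      refine Submodule.mul_induction_on hx ?_ ?_
      · intro a ha b hb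
        obtain ⟨s, hs, v, hv⟩ := ih a ha
        obtain ⟨t, ht, w, hw⟩ := hp b hb
        refine ⟨s * t, fun h => (hprime.mem_or_mem h).elim hs ht, v * w, ?_⟩
        calc s * t * (a * b) = (s * a) * (t * b) := by ring
          _ = _ := by rw [hv, hw]; ring
      · rintro a b ⟨s, hs, v, hv⟩ ⟨t, ht, w, hw⟩
        refine ⟨s * t, fun h => (hprime.mem_or_mem h).elim hs ht, t * v + s * w, ?_⟩
        calc s * t * (a + b) = t * (s * a) + s * (t * b) := by ring
          _ = _ := by rw [hv, hw]; ring
  have hprim : ∀ n : ℕ, ∀ s x, s ∉ M → s * x ∈ M ^ n → x ∈ M ^ n := by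
    intro n
    rcases Nat.eq_zero_or_pos n with rfl | hn
    · intro s x _ _; simp
    · intro s x hs hx
      have hr : (M ^ n).radical = M := by
        rw [Ideal.radical_pow M hn.ne', hprime.radical]
      have hpr : (M ^ n).IsPrimary := Ideal.isPrimary_of_isMaximal_radical (by rwa [hr])
      rw [mul_comm] at hx
      rcases (Ideal.isPrimary_iff.1 hpr).2 hx with h | h
      · exact h
      · rw [hr] at h; exact absurd h hs
  have hfac : ∀ x, x ∉ ki M → ∃ k s v, s ∉ M ∧ v ∉ M ∧ s * x = p ^ k * v := by
    intro x hx
    have hex : ∃ n, x ∉ M ^ n := by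
      by_contra hcon
      push Not at hcon
      exact hx ((hmem x).2 fun n _ => hcon n)
    classical
    have h1 := Nat.find_spec hex
    have h2 : Nat.find hex ≠ 0 := by
      intro h0
      rw [h0] at h1
      simp at h1
    obtain ⟨k, hk⟩ := Nat.exists_eq_succ_of_ne_zero h2
    have h3 : x ∈ M ^ k := by
      by_contra h
      exact Nat.find_min hex (by omega) h
    obtain ⟨s, hs, v, hv⟩ := hL k x h3
    refine ⟨k, s, v, hs, fun hvM => h1 ?_, hv⟩
    apply hprim _ s x hs
    rw [hv, hk, Nat.succ_eq_add_one, pow_succ]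
    exact Ideal.mul_mem_mul (Ideal.pow_mem_pow hpM k) hvM
  have hle : ki M ≤ M := fun x hx => by simpa using (hmem x).1 hx 1 le_rfl
  have hne : ki M ≠ M := by
    intro h
    have h2 : p ∈ M ^ 2 := (hmem p).1 (by rw [h]; exact hpM) 2 (by norm_num)
    obtain ⟨s, hs, v, hv⟩ := hL 2 p h2
    have : s = p * v := by
      apply mul_right_cancel₀ hp0
      rw [hv]; ring
    exact hs (this ▸ M.mul_mem_right v hpM)
  refine ⟨?_, hle, ?_, hne, ?_⟩
  · refine ⟨fun h => hprime.ne_top (top_le_iff.1 (h ▸ hle)), ?_⟩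
    intro x y hxy
    by_contra hcon
    push Not at hcon
    obtain ⟨k, s, v, hs, hv, h1⟩ := hfac x hcon.1
    obtain ⟨l, t, w, ht, hw, h2⟩ := hfac y hcon.2
    obtain ⟨r, hr, q, hq⟩ := hL (k + l + 1) _ ((hmem _).1 hxy (k + l + 1) (by omega))
    have : r * (v * w) = p * (q * s * t) := by
      apply mul_left_cancel₀ (pow_ne_zero (k + l) hp0)
      calc p ^ (k + l) * (r * (v * w)) = r * ((p ^ k * v) * (p ^ l * w)) := by ring
        _ = (r * (x * y)) * (s * t) := by rw [← h1, ← h2]; ring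
        _ = _ := by rw [hq]; ring
    have hmm : r * (v * w) ∈ M := this ▸ M.mul_mem_right _ hpM
    rcases hprime.mem_or_mem hmm with h | h
    · exact hr h
    · exact (hprime.mem_or_mem h).elim hv hw
  · intro h
    exact hne (h.eq_of_le hprime.ne_top hle)
  · intro P hP h1 h2
    by_cases h : P ≤ ki M
    · exact Or.inl (le_antisymm h h1)
    · right
      obtain ⟨x, hxP, hx⟩ := SetLike.not_le_iff_exists.1 h
      obtain ⟨k, s, v, hs, hv, h3⟩ := hfac x hx
      have h4 : p ^ k * v ∈ P := h3 ▸ P.mul_mem_left s hxP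
      have hpP : p ∈ P := by
        rcases hP.mem_or_mem h4 with h5 | h5
        · exact hP.mem_of_pow_mem _ h5
        · exact absurd (h2 h5) hv
      refine le_antisymm h2 fun u hu => ?_
      obtain ⟨s, hs, w, hw⟩ := hp u hu
      have : s * u ∈ P := hw ▸ P.mul_mem_right w hpP
      exact (hP.mem_or_mem this).resolve_left fun h6 => hs (h2 h6)

/-! ### Basic facts on `Hol D` -/

variable {D : Set ℂ}

/-- A chosen ambient extension. -/
noncomputable def E (x : Hol D) : ℂ → ℂ := Classical.choose x.2

theorem E_diff (x : Hol D) : DifferentiableOn ℂ (E x) D := (Classical.choose_spec x.2).1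

theorem E_eq (x : Hol D) (z : D) : E x z = x.1 z := (Classical.choose_spec x.2).2 z

theorem E_eq' (x : Hol D) {z : ℂ} (hz : z ∈ D) : E x z = x.1 ⟨z, hz⟩ := E_eq x ⟨z, hz⟩

/-- build an element -/
def mk (F : ℂ → ℂ) (hF : DifferentiableOn ℂ F D) : Hol D := ⟨fun z => F z, F, hF, fun _ => rfl⟩

@[simp] theorem mk_apply (F : ℂ → ℂ) (hF : DifferentiableOn ℂ F D) (z : D) :
    (mk F hF).1 z = F z := rfl

@[simp] theorem mul_apply (x y : Hol D) (z : D) : (x * y).1 z = x.1 z * y.1 z := rfl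
@[simp] theorem add_apply (x y : Hol D) (z : D) : (x + y).1 z = x.1 z + y.1 z := rfl
@[simp] theorem sub_apply (x y : Hol D) (z : D) : (x - y).1 z = x.1 z - y.1 z := rfl
@[simp] theorem one_apply (z : D) : (1 : Hol D).1 z = 1 := rfl
@[simp] theorem zero_apply (z : D) : (0 : Hol D).1 z = 0 := rfl
@[simp] theorem pow_apply (x : Hol D) (n : ℕ) (z : D) : (x ^ n).1 z = x.1 z ^ n := rfl

theorem hol_ext {x y : Hol D} (h : ∀ z : D, x.1 z = y.1 z) : x = y := Subtype.ext (funext h)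

/-- constants -/
def C (D : Set ℂ) (c : ℂ) : Hol D := mk (fun _ => c) (differentiableOn_const c)
/-- the function `z - a` -/
def X (a : D) : Hol D := mk (fun z => z - a) (by fun_prop)

@[simp] theorem C_apply (c : ℂ) (z : D) : (C D c).1 z = c := rfl
@[simp] theorem X_apply (a z : D) : (X a).1 z = z - a := rfl

theorem exists_of_local (φ : ℂ → ℂ)
    (h : ∀ a ∈ D, ∃ G : ℂ → ℂ, DifferentiableAt ℂ G a ∧ φ =ᶠ[𝓝 a] G) :
    DifferentiableOn ℂ φ D := by
  intro a ha
  obtain ⟨G, hG, h⟩ := h a ha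
  exact (hG.congr_of_eventuallyEq h).differentiableWithinAt

theorem E_diffAt (hD : IsOpen D) (x : Hol D) {a : ℂ} (ha : a ∈ D) : DifferentiableAt ℂ (E x) a :=
  (E_diff x).differentiableAt (hD.mem_nhds ha)

theorem E_an (hD : IsOpen D) (x : Hol D) : AnalyticOnNhd ℂ (E x) D :=
  (E_diff x).analyticOnNhd hD

theorem dvd_X (hD : IsOpen D) (x : Hol D) (a : D) (hx : x.1 a = 0) : X a ∣ x := by
  refine ⟨mk (dslope (E x) a) ?_, ?_⟩
  · exact (Complex.differentiableOn_dslope (hD.mem_nhds a.2)).2 (E_diff x)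
  · apply hol_ext
    intro z
    have := sub_smul_dslope (E x) (a : ℂ) (z : ℂ)
    rw [E_eq, E_eq, hx, smul_eq_mul] at this
    simp only [mul_apply, X_apply, mk_apply]
    rw [this]; simp

theorem noZeroDiv (hD : IsOpen D) (hc : IsConnected D) : IsDomain (Hol D) := by
  have : NoZeroDivisors (Hol D) := by
    constructor
    intro x y hxy
    have := AnalyticOnNhd.eq_zero_or_eq_zero_of_mul_eq_zero (E_an hD x) (E_an hD y) (U := D)
      (fun z hz => by
        rw [E_eq' x hz, E_eq' y hz, ← mul_apply, hxy]; rfl) hc.isPreconnected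
    rcases this with h | h
    · left; apply hol_ext; intro z; rw [← E_eq]; exact h z z.2
    · right; apply hol_ext; intro z; rw [← E_eq]; exact h z z.2
  have : Nontrivial (Hol D) := by
    obtain ⟨a, ha⟩ := hc.nonempty
    refine ⟨0, 1, fun h => ?_⟩
    have := congrArg (fun x : Hol D => x.1 ⟨a, ha⟩) h
    simp at this
  exact NoZeroDivisors.to_isDomain _

theorem isolated (hD : IsOpen D) (hc : IsConnected D) (f : Hol D) (hf : f ≠ 0) (a : D) :
    ∀ᶠ z in 𝓝[≠] (a : ℂ), E f z ≠ 0 := by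
  rcases (E_an hD f a a.2).eventually_eq_zero_or_eventually_ne_zero with h | h
  · exfalso
    apply hf
    apply hol_ext
    intro z
    rw [← E_eq]
    exact (E_an hD f).eqOn_zero_of_preconnected_of_eventuallyEq_zero hc.isPreconnected a.2 h z.2
  · exact h

theorem finite_zeros (hD : IsOpen D) (hc : IsConnected D) (f : Hol D) (hf : f ≠ 0) (K : Set ℂ)
    (hK : IsCompact K) (hKD : K ⊆ D) : {a : ℂ | a ∈ K ∧ E f a = 0}.Finite := by
  by_contra hinf
  obtain ⟨x, hx, hacc⟩ := Set.Infinite.exists_accPt_of_subset_isCompact hinf hK (fun a ha => ha.1)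
  have := isolated hD hc f hf ⟨x, hKD hx⟩
  rw [accPt_iff_frequently_nhdsNE] at hacc
  exact (hacc.and_eventually this).exists.elim fun z hz => hz.2 hz.1.2

theorem exists_factor (hD : IsOpen D) (hc : IsConnected D) (f : Hol D) (hf : f ≠ 0) (a : D) :
    ∃ (m : ℕ) (e : Hol D), f = X a ^ m * e ∧ e.1 a ≠ 0 := by
  have h0 : ¬ ∀ᶠ z in 𝓝 (a : ℂ), E f z = 0 := by
    intro h
    have h1 := (h.filter_mono nhdsWithin_le_nhds).and (isolated hD hc f hf a)
    obtain ⟨z, hz⟩ := h1.exists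
    exact hz.2 hz.1
  obtain ⟨n, g, hg, hga, h⟩ := ((E_an hD f a a.2).exists_eventuallyEq_pow_smul_nonzero_iff).2 h0
  have key : ∀ k ≤ n, ∃ e : Hol D, f = X a ^ k * e ∧
      ∀ᶠ z in 𝓝[≠] (a : ℂ), E e z = (z - a) ^ (n - k) * g z := by
    intro k
    induction k with
    | zero =>
      intro _
      refine ⟨f, by simp, ?_⟩
      filter_upwards [h.filter_mono nhdsWithin_le_nhds] with z hz
      simpa using hz
    | succ k ih =>
      intro hk
      obtain ⟨e, he, hev⟩ := ih (by omega)
      have hz : e.1 a = 0 := by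
        have t1 : Tendsto (E e) (𝓝[≠] (a : ℂ)) (𝓝 (E e a)) :=
          (E_diffAt hD e a.2).continuousAt.tendsto.mono_left nhdsWithin_le_nhds
        have t2 : Tendsto (fun z : ℂ => (z - a) ^ (n - k) * g z) (𝓝[≠] (a : ℂ)) (𝓝 0) := by
          have : ContinuousAt (fun z : ℂ => (z - a) ^ (n - k) * g z) a := by
            have := hg.continuousAt
            fun_prop
          have := this.tendsto.mono_left (nhdsWithin_le_nhds (s := {(a : ℂ)}ᶜ))
          simpa [show n - k ≠ 0 by omega] using this
        rw [← E_eq]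
        exact tendsto_nhds_unique (t1.congr' hev) t2
      obtain ⟨e', he'⟩ := dvd_X hD e a hz
      refine ⟨e', by rw [he, he', pow_succ]; ring, ?_⟩
      filter_upwards [hev, self_mem_nhdsWithin,
        (hD.mem_nhds a.2 |> fun h => nhdsWithin_le_nhds h)] with z hz1 hz2 hz3
      have hz2' : z - a ≠ 0 := sub_ne_zero.2 hz2
      apply mul_left_cancel₀ hz2'
      rw [E_eq' e' hz3]
      rw [E_eq' e hz3, he'] at hz1
      simp only [mul_apply, X_apply] at hz1
      rw [hz1, ← mul_assoc, ← pow_succ', show n - (k + 1) + 1 = n - k by omega]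
  obtain ⟨e, he, hev⟩ := key n le_rfl
  refine ⟨n, e, he, ?_⟩
  have t1 : Tendsto (E e) (𝓝[≠] (a : ℂ)) (𝓝 (E e a)) :=
    (E_diffAt hD e a.2).continuousAt.tendsto.mono_left nhdsWithin_le_nhds
  have t2 : Tendsto g (𝓝[≠] (a : ℂ)) (𝓝 (g a)) :=
    hg.continuousAt.tendsto.mono_left nhdsWithin_le_nhds
  rw [← E_eq, tendsto_nhds_unique (t1.congr' hev) (by simpa using t2)]
  exact hga

theorem dvd_of_local (hD : IsOpen D) (f g : Hol D)
    (h : ∀ a : D, ∃ (m : ℕ) (e : Hol D), f = X a ^ m * e ∧ e.1 a ≠ 0 ∧ X a ^ m ∣ g) : f ∣ g := by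
  choose m e he hea q hq using h
  classical
  let φ : ℂ → ℂ := fun z => if hz : z ∈ D then (q ⟨z, hz⟩).1 ⟨z, hz⟩ / (e ⟨z, hz⟩).1 ⟨z, hz⟩ else 0
  have hφ : ∀ z : D, φ z = (q z).1 z / (e z).1 z := fun z => by simp [φ]
  have key : ∀ a z : D, (e a).1 z ≠ 0 → φ z = (q a).1 z / (e a).1 z := by
    intro a z hne
    by_cases hza : z = a
    · subst hza; exact hφ z
    have h1 : ((z : ℂ) - a) ≠ 0 := sub_ne_zero.2 (fun h => hza (Subtype.ext h))
    have hfz : f.1 z ≠ 0 := by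
      rw [he a]; simp [h1, hne]
    have e1 : ∀ b : D, (e b).1 z ≠ 0 → ((z : ℂ) - b) ^ m b ≠ 0 →
        (q b).1 z / (e b).1 z = g.1 z / f.1 z := by
      intro b hb hb'
      have hg' : g.1 z = ((z : ℂ) - b) ^ m b * (q b).1 z := by
        conv_lhs => rw [hq b]
        simp
      have hf' : f.1 z = ((z : ℂ) - b) ^ m b * (e b).1 z := by
        conv_lhs => rw [he b]
        simp
      rw [hg', hf']
      field_simp
    rw [hφ z, e1 a hne (pow_ne_zero _ h1), e1 z (hea z) ?_]
    intro h0
    apply hfz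
    rw [he z]; simp only [mul_apply, pow_apply, X_apply, h0, zero_mul]
  have hd : DifferentiableOn ℂ φ D := by
    apply exists_of_local
    intro a ha
    refine ⟨fun z => E (q ⟨a, ha⟩) z / E (e ⟨a, ha⟩) z, ?_, ?_⟩
    · refine (E_diffAt hD _ ha).div (E_diffAt hD _ ha) ?_
      rw [E_eq' _ ha]; exact hea _
    · have : ∀ᶠ z in 𝓝 a, E (e ⟨a, ha⟩) z ≠ 0 := by
        apply (E_diffAt hD _ ha).continuousAt.eventually_ne
        rw [E_eq' _ ha]; exact hea _
      filter_upwards [this, hD.mem_nhds ha] with z hz hzD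
      rw [E_eq' _ hzD] at hz ⊢
      rw [E_eq' _ hzD]
      exact key ⟨a, ha⟩ ⟨z, hzD⟩ hz
  refine ⟨mk φ hd, ?_⟩
  apply hol_ext
  intro z
  simp only [mul_apply, mk_apply, hφ]
  have := hea z
  conv_lhs => rw [hq z]
  conv_rhs => rw [he z]
  simp only [mul_apply, pow_apply]
  field_simp

theorem bigO_dvd (hD : IsOpen D) (a : D) (c : ℝ) (m : ℕ) : ∀ h : Hol D,
    (∀ᶠ z in 𝓝[≠] (a : ℂ), ‖E h z‖ ≤ c * ‖z - a‖ ^ m) → X a ^ m ∣ h := by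
  induction m with
  | zero => intro h _; simp
  | succ m ih =>
    intro h hh
    have hz : h.1 a = 0 := by
      have t1 : Tendsto (E h) (𝓝[≠] (a : ℂ)) (𝓝 (E h a)) :=
        (E_diffAt hD h a.2).continuousAt.tendsto.mono_left nhdsWithin_le_nhds
      have t2 : Tendsto (fun z : ℂ => c * ‖z - a‖ ^ (m + 1)) (𝓝[≠] (a : ℂ)) (𝓝 0) := by
        have : ContinuousAt (fun z : ℂ => c * ‖z - a‖ ^ (m + 1)) a := by fun_prop
        have := this.tendsto.mono_left (nhdsWithin_le_nhds (s := {(a : ℂ)}ᶜ))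
        simpa using this
      rw [← E_eq]
      exact tendsto_nhds_unique t1 (squeeze_zero_norm' hh t2)
    obtain ⟨k, hk⟩ := dvd_X hD h a hz
    rw [hk, pow_succ']
    apply mul_dvd_mul_left
    apply ih
    filter_upwards [hh, self_mem_nhdsWithin,
        (hD.mem_nhds a.2 |> fun h => nhdsWithin_le_nhds h)] with z hz1 hz2 hz3
    have hz2' : 0 < ‖z - a‖ := norm_pos_iff.2 (sub_ne_zero.2 hz2)
    rw [E_eq' h hz3, hk] at hz1
    simp only [mul_apply, X_apply, norm_mul] at hz1
    rw [E_eq' k hz3]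
    rw [pow_succ] at hz1
    nlinarith

/-! ### Approximation -/

/-- `P` is bounded on `S` and uniformly approximable there by functions holomorphic on `D`. -/
def Ap (D S : Set ℂ) (P : ℂ → ℂ) : Prop :=
  (∃ B : ℝ, ∀ z ∈ S, ‖P z‖ ≤ B) ∧
    ∀ ε > 0, ∃ Q : ℂ → ℂ, DifferentiableOn ℂ Q D ∧ ∀ z ∈ S, ‖P z - Q z‖ ≤ ε

theorem Ap.of_diff {S : Set ℂ} {P : ℂ → ℂ} (hP : DifferentiableOn ℂ P D) (B : ℝ)
    (hB : ∀ z ∈ S, ‖P z‖ ≤ B) : Ap D S P :=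
  ⟨⟨B, hB⟩, fun ε hε => ⟨P, hP, fun z _ => by simpa using hε.le⟩⟩

theorem Ap.const (S : Set ℂ) (c : ℂ) : Ap D S (fun _ => c) :=
  Ap.of_diff (differentiableOn_const c) ‖c‖ fun _ _ => le_rfl

theorem Ap.add {S : Set ℂ} {P P' : ℂ → ℂ} (h : Ap D S P) (h' : Ap D S P') :
    Ap D S (fun z => P z + P' z) := by
  obtain ⟨⟨B, hB⟩, hQ⟩ := h
  obtain ⟨⟨B', hB'⟩, hQ'⟩ := h'
  refine ⟨⟨B + B', fun z hz => (norm_add_le _ _).trans (add_le_add (hB z hz) (hB' z hz))⟩, ?_⟩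
  intro ε hε
  obtain ⟨Q, hd, hq⟩ := hQ (ε / 2) (by positivity)
  obtain ⟨Q', hd', hq'⟩ := hQ' (ε / 2) (by positivity)
  refine ⟨fun z => Q z + Q' z, hd.add hd', fun z hz => ?_⟩
  calc ‖P z + P' z - (Q z + Q' z)‖ = ‖(P z - Q z) + (P' z - Q' z)‖ := by ring_nf
    _ ≤ ‖P z - Q z‖ + ‖P' z - Q' z‖ := norm_add_le _ _
    _ ≤ ε := by linarith [hq z hz, hq' z hz]

theorem Ap.mul {S : Set ℂ} {P P' : ℂ → ℂ} (h : Ap D S P) (h' : Ap D S P') :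
    Ap D S (fun z => P z * P' z) := by
  obtain ⟨⟨B, hB⟩, hQ⟩ := h
  obtain ⟨⟨B', hB'⟩, hQ'⟩ := h'
  refine ⟨⟨|B| * |B'|, fun z hz => ?_⟩, ?_⟩
  · rw [norm_mul]
    exact mul_le_mul ((hB z hz).trans (le_abs_self _)) ((hB' z hz).trans (le_abs_self _))
      (norm_nonneg _) (abs_nonneg _)
  intro ε hε
  set d : ℝ := min 1 (ε / (|B| + |B'| + 1)) with hd0
  have hdpos : 0 < d := by positivity
  have hd1 : d ≤ 1 := min_le_left _ _
  have hd2 : d * (|B| + |B'| + 1) ≤ ε := by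
    have : d ≤ ε / (|B| + |B'| + 1) := min_le_right _ _
    rwa [le_div_iff₀ (by positivity)] at this
  obtain ⟨Q, hd, hq⟩ := hQ d hdpos
  obtain ⟨Q', hd', hq'⟩ := hQ' d hdpos
  refine ⟨fun z => Q z * Q' z, hd.mul hd', fun z hz => ?_⟩
  have hb := (hB z hz).trans (le_abs_self _)
  have hb' := (hB' z hz).trans (le_abs_self _)
  have h3 : ‖Q' z‖ ≤ |B'| + 1 := by
    calc ‖Q' z‖ = ‖P' z - (P' z - Q' z)‖ := by ring_nf
      _ ≤ ‖P' z‖ + ‖P' z - Q' z‖ := norm_sub_le _ _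
      _ ≤ |B'| + 1 := by linarith [hq' z hz]
  calc ‖P z * P' z - (Q z * Q' z)‖ = ‖P z * (P' z - Q' z) + (P z - Q z) * Q' z‖ := by ring_nf
    _ ≤ ‖P z‖ * ‖P' z - Q' z‖ + ‖P z - Q z‖ * ‖Q' z‖ := by
        refine (norm_add_le _ _).trans ?_
        rw [norm_mul, norm_mul]
    _ ≤ |B| * d + d * (|B'| + 1) := by
        gcongr
        · exact hq' z hz
        · exact hq z hz
    _ ≤ ε := by linarith

theorem Ap.pow {S : Set ℂ} {P : ℂ → ℂ} (h : Ap D S P) (n : ℕ) : Ap D S (fun z => P z ^ n) := by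
  induction n with
  | zero => simpa using Ap.const S 1
  | succ n ih => simpa [pow_succ] using ih.mul h

theorem Ap.sum {S : Set ℂ} (P : ℕ → ℂ → ℂ) (h : ∀ i, Ap D S (P i)) (n : ℕ) :
    Ap D S (fun z => ∑ i ∈ Finset.range n, P i z) := by
  induction n with
  | zero => simpa using Ap.const S 0
  | succ n ih => simpa [Finset.sum_range_succ] using ih.add (h n)

theorem Ap.geom {S : Set ℂ} {u : ℂ → ℂ} (hu : DifferentiableOn ℂ u D)
    (h : ∀ z ∈ S, ‖u z‖ ≤ 1 / 2) : Ap D S (fun z => (1 - u z)⁻¹) := by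
  have hlow : ∀ z ∈ S, 1 / 2 ≤ ‖1 - u z‖ := fun z hz => by
    have := norm_sub_norm_le (1 : ℂ) (u z)
    rw [norm_one] at this
    linarith [h z hz]
  have hB : ∀ z ∈ S, ‖(1 - u z)⁻¹‖ ≤ 2 := fun z hz => by
    rw [norm_inv]
    calc _ ≤ (1 / 2 : ℝ)⁻¹ := inv_anti₀ (by norm_num) (hlow z hz)
      _ = 2 := by norm_num
  refine ⟨⟨2, hB⟩, fun ε hε => ?_⟩
  obtain ⟨n, hn⟩ := exists_pow_lt_of_lt_one (show (0 : ℝ) < ε / 2 by positivity)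
    (show (1 / 2 : ℝ) < 1 by norm_num)
  refine ⟨fun z => ∑ i ∈ Finset.range n, u z ^ i, ?_, fun z hz => ?_⟩
  · exact DifferentiableOn.fun_sum fun i _ => hu.pow i
  · have hne : 1 - u z ≠ 0 := by
      intro h0
      have := hlow z hz
      rw [h0, norm_zero] at this
      norm_num at this
    have hg : (1 - u z) * ∑ i ∈ Finset.range n, u z ^ i = 1 - u z ^ n := mul_neg_geom_sum _ _
    have : (1 - u z)⁻¹ - ∑ i ∈ Finset.range n, u z ^ i = u z ^ n * (1 - u z)⁻¹ := by
      apply mul_left_cancel₀ hne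
      rw [mul_sub, hg]
      field_simp
      ring
    rw [this, norm_mul, norm_pow]
    calc ‖u z‖ ^ n * ‖(1 - u z)⁻¹‖ ≤ (1 / 2) ^ n * 2 := by
          gcongr
          · exact h z hz
          · exact hB z hz
      _ ≤ ε := by linarith

theorem exists_S (hD : IsOpen D) : ∃ S : ℂ → Set ℂ,
    (∀ a ∈ D, a ∉ S a ∧ Ap D (S a) (fun z => (z - a)⁻¹)) ∧
    ∀ K, IsCompact K → K ⊆ D → ∃ K', IsCompact K' ∧ K' ⊆ D ∧ ∀ a ∈ D, a ∉ K' → K ⊆ S a := by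
  have key : ∀ a : ℂ, ∃ S : Set ℂ, a ∈ D → (a ∉ S ∧ Ap D S (fun z => (z - a)⁻¹) ∧
      ((∃ w, w ∉ D ∧ ‖a‖ * ‖a - w‖ ≤ 1 ∧ (∀ w', w' ∉ D → ‖a - w‖ ≤ ‖a - w'‖) ∧
          S = {z | 2 * ‖a - w‖ ≤ ‖z - w‖}) ∨
        ((∀ w, w ∉ D → 1 < ‖a‖ * ‖a - w‖) ∧ S = {z | ‖z‖ ≤ ‖a‖ / 2}) ∨ a = 0)) := by
    intro a
    by_cases haD : a ∈ D
    swap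
    · exact ⟨∅, fun h => absurd h haD⟩
    by_cases h1 : ∃ w, w ∉ D ∧ ‖a‖ * ‖a - w‖ ≤ 1 ∧ (∀ w', w' ∉ D → ‖a - w‖ ≤ ‖a - w'‖)
    · obtain ⟨w, hw, hw1, hw2⟩ := h1
      have hpos : 0 < ‖a - w‖ := norm_pos_iff.2 (sub_ne_zero.2 fun h => hw (h ▸ haD))
      refine ⟨{z | 2 * ‖a - w‖ ≤ ‖z - w‖}, fun _ => ⟨?_, ?_, Or.inl ⟨w, hw, hw1, hw2, rfl⟩⟩⟩
      · intro h
        have h : 2 * ‖a - w‖ ≤ ‖a - w‖ := h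
        linarith
      · have hdinv : DifferentiableOn ℂ (fun z => (z - w)⁻¹) D := by
          intro z hz
          have : z - w ≠ 0 := sub_ne_zero.2 fun h => hw (h ▸ hz)
          exact ((differentiableAt_id.sub_const w).inv this).differentiableWithinAt
        have hbd : ∀ z ∈ {z : ℂ | 2 * ‖a - w‖ ≤ ‖z - w‖}, ‖(z - w)⁻¹‖ ≤ (2 * ‖a - w‖)⁻¹ := by
          intro z hz
          rw [norm_inv]
          exact inv_anti₀ (by positivity) hz
        have A1 : Ap D {z | 2 * ‖a - w‖ ≤ ‖z - w‖} (fun z => (z - w)⁻¹) :=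
          Ap.of_diff hdinv _ hbd
        have A2 : Ap D {z | 2 * ‖a - w‖ ≤ ‖z - w‖} (fun z => (1 - (a - w) * (z - w)⁻¹)⁻¹) := by
          apply Ap.geom (hdinv.const_mul _)
          intro z hz
          rw [norm_mul]
          calc ‖a - w‖ * ‖(z - w)⁻¹‖ ≤ ‖a - w‖ * (2 * ‖a - w‖)⁻¹ := by
                gcongr; exact hbd z hz
            _ = 1 / 2 := by field_simp
        have A3 := A1.mul A2
        obtain ⟨⟨B, hB⟩, hQ⟩ := A3
        have heq : ∀ z ∈ {z : ℂ | 2 * ‖a - w‖ ≤ ‖z - w‖},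
            (z - w)⁻¹ * (1 - (a - w) * (z - w)⁻¹)⁻¹ = (z - a)⁻¹ := by
          intro z hz
          have hzw : z - w ≠ 0 := by
            intro h0
            have hz : 2 * ‖a - w‖ ≤ ‖z - w‖ := hz
            rw [h0, norm_zero] at hz
            linarith
          rw [← mul_inv]
          congr 1
          field_simp
          ring
        refine ⟨⟨B, fun z hz => by simpa only [heq z hz] using hB z hz⟩, fun ε hε => ?_⟩
        obtain ⟨Q, h1, h2⟩ := hQ ε hε
        exact ⟨Q, h1, fun z hz => by simpa only [heq z hz] using h2 z hz⟩
    · by_cases ha0 : a = 0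
      · refine ⟨∅, fun _ => ⟨by simp, ⟨⟨0, by simp⟩, fun ε _ => ⟨0, ?_, by simp⟩⟩,
          Or.inr (Or.inr ha0)⟩⟩
        exact differentiableOn_const 0
      have hpos : 0 < ‖a‖ := norm_pos_iff.2 ha0
      refine ⟨{z | ‖z‖ ≤ ‖a‖ / 2}, fun _ => ⟨?_, ?_, Or.inr (Or.inl ⟨?_, rfl⟩)⟩⟩
      · intro h
        have h : ‖a‖ ≤ ‖a‖ / 2 := h
        linarith
      · have A2 : Ap D {z : ℂ | ‖z‖ ≤ ‖a‖ / 2} (fun z => (1 - z * a⁻¹)⁻¹) := by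
          apply Ap.geom (by fun_prop)
          intro z hz
          rw [norm_mul, norm_inv]
          calc ‖z‖ * ‖a‖⁻¹ ≤ (‖a‖ / 2) * ‖a‖⁻¹ := by
                gcongr; exact hz
            _ = 1 / 2 := by field_simp
        have A3 := (Ap.const _ (-a⁻¹)).mul A2
        have heq : ∀ z : ℂ, -a⁻¹ * (1 - z * a⁻¹)⁻¹ = (z - a)⁻¹ := by
          intro z
          rw [← inv_neg, ← mul_inv]
          congr 1
          field_simp
          ring
        simpa only [heq] using A3
      · intro w hw
        by_contra hcon
        push Not at hcon
        apply h1
        have hcl : IsClosed (Dᶜ) := hD.isClosed_compl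
        obtain ⟨w0, hw0, h0⟩ := hcl.exists_infDist_eq_dist ⟨w, hw⟩ a
        have hmin : ∀ w', w' ∉ D → ‖a - w0‖ ≤ ‖a - w'‖ := by
          intro w' hw'
          rw [← dist_eq_norm, ← dist_eq_norm, ← h0]
          exact Metric.infDist_le_dist_of_mem hw'
        refine ⟨w0, hw0, le_trans ?_ hcon, hmin⟩
        gcongr
        exact hmin w hw
  choose S hS using key
  refine ⟨S, fun a ha => ⟨(hS a ha).1, (hS a ha).2.1⟩, ?_⟩
  intro K hK hKD
  obtain ⟨ε, hε, hthick⟩ := hK.exists_thickening_subset_open hD hKD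
  obtain ⟨R, hRpos, hR⟩ := hK.isBounded.exists_pos_norm_le
  have hfar : ∀ z ∈ K, ∀ w, w ∉ D → ε ≤ ‖z - w‖ := by
    intro z hz w hw
    by_contra hcon
    push Not at hcon
    apply hw
    apply hthick
    rw [Metric.mem_thickening_iff]
    exact ⟨z, hz, by rwa [dist_comm, dist_eq_norm]⟩
  set R' : ℝ := max (2 / ε) (2 * R)
  set η : ℝ := min (ε / 2) (1 / (2 * R))
  have hη : 0 < η := by positivity
  let K0 : Set ℂ := {a | ‖a‖ ≤ R' ∧ ∀ w, w ∉ D → η ≤ ‖a - w‖}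
  have hK0 : IsCompact K0 := by
    apply Metric.isCompact_of_isClosed_isBounded
    · apply IsClosed.inter
      · exact isClosed_le continuous_norm continuous_const
      · have : {a : ℂ | ∀ w, w ∉ D → η ≤ ‖a - w‖} = ⋂ w, ⋂ (_ : w ∉ D), {a | η ≤ ‖a - w‖} := by
          ext; simp
        change IsClosed {a : ℂ | ∀ w, w ∉ D → η ≤ ‖a - w‖}
        rw [this]
        exact isClosed_iInter fun w => isClosed_iInter fun _ =>
          isClosed_le continuous_const (by fun_prop)
    · refine (Metric.isBounded_closedBall (x := (0 : ℂ)) (r := R')).subset ?_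
      intro a ha
      simpa using ha.1
  refine ⟨K0 ∪ ({0} ∩ D), ?_, ?_, ?_⟩
  · apply hK0.union
    exact ((Set.finite_singleton (0 : ℂ)).inter_of_left D).isCompact
  · rintro a (ha | ha)
    · by_contra h
      have := ha.2 a h
      simp only [sub_self, norm_zero] at this
      linarith
    · exact ha.2
  · intro a ha hak z hz
    by_contra hzS
    apply hak
    obtain ⟨-, -, ⟨w, hw, hw1, hw2, hSa⟩ | ⟨hw, hSa⟩ | h0⟩ := hS a ha
    · left
      rw [hSa] at hzS
      have h1 : ‖z - w‖ < 2 * ‖a - w‖ := not_le.1 hzS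
      have h2 := hfar z hz w hw
      have h3 : ε / 2 ≤ ‖a - w‖ := by linarith
      refine ⟨le_trans ?_ (le_max_left _ _), fun w' hw' => (min_le_left _ _).trans ?_⟩
      · rw [le_div_iff₀ hε]
        nlinarith [norm_nonneg a]
      · exact h3.trans (hw2 w' hw')
    · left
      rw [hSa] at hzS
      have h1 : ‖a‖ / 2 < ‖z‖ := not_le.1 hzS
      have h2 := hR z hz
      have h3 : ‖a‖ ≤ 2 * R := by linarith
      refine ⟨h3.trans (le_max_right _ _), fun w' hw' => (min_le_right _ _).trans ?_⟩
      have h4 := hw w' hw'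
      rw [div_le_iff₀ (by positivity)]
      nlinarith [norm_nonneg (a - w')]
    · right
      exact ⟨h0, ha⟩

/-! ### Summation and interpolation -/

theorem bdd_on (x : Hol D) {K : Set ℂ} (hK : IsCompact K) (hKD : K ⊆ D) :
    ∃ B : ℝ, ∀ z ∈ K, ‖E x z‖ ≤ B :=
  hK.exists_bound_of_continuousOn ((E_diff x).continuousOn.mono hKD)

theorem summable_fix {ι : Type*} {u : ι → ℝ} (hu : Summable u) (P : ι → Prop) (v : ι → ℝ)
    (hP : {i | ¬ P i}.Finite) [DecidablePred P] :
    Summable (fun i => if P i then u i else v i) := by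
  refine (summable_congr_cofinite ?_).2 hu
  have : ∀ᶠ i in cofinite, P i := hP
  filter_upwards [this] with i hi
  simp [hi]

theorem sum_lemma (hD : IsOpen D) {ι : Type*} (T : ι → Hol D) (u : ι → ℝ) (hu : Summable u)
    (h : ∀ K, IsCompact K → K ⊆ D → ∃ c : ℝ, {i | ¬ ∀ z ∈ K, ‖E (T i) z‖ ≤ c * u i}.Finite) :
    ∃ g : Hol D, ∀ z : D, HasSum (fun i => (T i).1 z) (g.1 z) := by
  classical
  have hloc : ∀ a ∈ D, ∃ r > 0, Metric.closedBall a r ⊆ D ∧ ∃ v : ι → ℝ, Summable v ∧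
      ∀ i, ∀ z ∈ Metric.closedBall a r, ‖E (T i) z‖ ≤ v i := by
    intro a ha
    obtain ⟨r, hr, hball⟩ := Metric.nhds_basis_closedBall.mem_iff.1 (hD.mem_nhds ha)
    obtain ⟨c, hfin⟩ := h _ (isCompact_closedBall a r) hball
    choose B hB using fun i => bdd_on (T i) (isCompact_closedBall a r) hball
    refine ⟨r, hr, hball, _, summable_fix (hu.mul_left c) _ B hfin, ?_⟩
    intro i z hz
    split_ifs with hi
    · exact hi z hz
    · exact hB i z hz
  refine ⟨mk (fun z => ∑' i, E (T i) z) ?_, ?_⟩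
  · intro a ha
    obtain ⟨r, hr, hball, v, hv, hb⟩ := hloc a ha
    have := Complex.differentiableOn_tsum_of_summable_norm hv (F := fun i => E (T i))
      (U := Metric.ball a r)
      (fun i => (E_diff (T i)).mono (Metric.ball_subset_closedBall.trans hball))
      Metric.isOpen_ball (fun i z hz => hb i z (Metric.ball_subset_closedBall hz))
    exact (this.differentiableAt (Metric.ball_mem_nhds a hr)).differentiableWithinAt
  · intro z
    obtain ⟨r, hr, hball, v, hv, hb⟩ := hloc z z.2
    have hs : Summable (fun i => E (T i) z) :=
      Summable.of_norm_bounded hv fun i => hb i z (Metric.mem_closedBall_self hr.le)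
    have h2 : (fun i => (T i).1 z) = fun i => E (T i) z := funext fun i => (E_eq (T i) z).symm
    rw [h2]
    exact hs.hasSum

theorem exists_jet (hD : IsOpen D) (a : D) (e c : Hol D) (he : e.1 a ≠ 0) (m : ℕ) :
    ∃ p : ℕ → ℂ, X a ^ m ∣ e * (∑ i ∈ Finset.range m, C D (p i) * X a ^ i) - c := by
  induction m with
  | zero => exact ⟨0, by simp⟩
  | succ m ih =>
    obtain ⟨p, q, hq⟩ := ih
    let p' : ℕ → ℂ := fun i => if i < m then p i else - (q.1 a / e.1 a)
    refine ⟨p', ?_⟩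
    have h1 : ∑ i ∈ Finset.range m, C D (p' i) * X a ^ i
        = ∑ i ∈ Finset.range m, C D (p i) * X a ^ i := by
      apply Finset.sum_congr rfl
      intro i hi
      simp [p', Finset.mem_range.1 hi]
    obtain ⟨k, hk⟩ := dvd_X hD (q + e * C D (p' m)) a (by
      simp [p']; field_simp; ring)
    refine ⟨k, ?_⟩
    rw [Finset.sum_range_succ, h1]
    calc _ = (e * (∑ i ∈ Finset.range m, C D (p i) * X a ^ i) - c)
          + X a ^ m * (e * C D (p' m)) := by ring
      _ = X a ^ m * (q + e * C D (p' m)) := by rw [hq]; ring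
      _ = _ := by rw [hk]; ring

theorem sum_apply (s : Finset ℕ) (F : ℕ → Hol D) (z : D) :
    (∑ i ∈ s, F i).1 z = ∑ i ∈ s, (F i).1 z := by
  classical
  induction s using Finset.induction_on with
  | empty => simp
  | insert a s ha ih => rw [Finset.sum_insert ha, Finset.sum_insert ha, add_apply, ih]

theorem countable_zeros (hD : IsOpen D) (hc : IsConnected D) (f : Hol D) (hf : f ≠ 0) :
    Countable {a : D // f.1 a = 0} := by
  have : LocallyCompactSpace D := hD.locallyCompactSpace
  let K := CompactExhaustion.choice D
  have hcov : {a : D | f.1 a = 0} ⊆ ⋃ n, {a : D | a ∈ K n ∧ f.1 a = 0} := by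
    intro a ha
    have : a ∈ ⋃ n, K n := by rw [K.iUnion_eq]; trivial
    obtain ⟨n, hn⟩ := Set.mem_iUnion.1 this
    exact Set.mem_iUnion.2 ⟨n, hn, ha⟩
  have : {a : D | f.1 a = 0}.Countable := by
    refine (Set.countable_iUnion fun n => ?_).mono hcov
    apply Set.Finite.countable
    have hfin := finite_zeros hD hc f hf ((↑) '' (K n)) ((K.isCompact n).image continuous_subtype_val)
      (by rintro _ ⟨x, _, rfl⟩; exact x.2)
    refine (hfin.preimage (f := ((↑) : D → ℂ)) Subtype.val_injective.injOn).subset ?_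
    rintro a ⟨h1, h2⟩
    exact ⟨⟨a, h1, rfl⟩, by rw [E_eq]; exact h2⟩
  exact this.to_subtype

theorem interp (hD : IsOpen D) (hc : IsConnected D) (f : Hol D) (hf : f ≠ 0) (m : D → ℕ)
    (e : D → Hol D) (he : ∀ a, f = X a ^ m a * e a) (hea : ∀ a, (e a).1 a ≠ 0) (c : D → Hol D) :
    ∃ g : Hol D, ∀ a, X a ^ m a ∣ g - c a := by
  classical
  obtain ⟨S, hS, hSK⟩ := exists_S hD
  choose p hp using fun a => exists_jet hD a (e a) (c a) (hea a) (m a)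
  let J : D → Hol D := fun a => ∑ i ∈ Finset.range (m a), C D (p a i) * X a ^ i
  have hJ : ∀ a, X a ^ m a ∣ e a * J a - c a := hp
  let P : D → ℂ → ℂ := fun a z => ∑ i ∈ Finset.range (m a), p a i * ((z - a)⁻¹) ^ (m a - i)
  have hP : ∀ a : D, Ap D (S a) (P a) := fun a =>
    Ap.sum (fun i z => p a i * ((z - a)⁻¹) ^ (m a - i))
      (fun i => (Ap.const _ _).mul ((hS a a.2).2.pow _)) (m a)
  have hPd : ∀ a : D, ∀ z : ℂ, z ≠ a → ContinuousAt (P a) z := by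
    intro a z hz
    have : z - a ≠ 0 := sub_ne_zero.2 hz
    have h1 : ContinuousAt (fun z : ℂ => (z - a)⁻¹) z :=
      ContinuousAt.inv₀ (by fun_prop) this
    have h2 : Continuous (fun w : ℂ => ∑ i ∈ Finset.range (m a), p a i * w ^ (m a - i)) :=
      continuous_finsetSum _ fun i _ => continuous_const.mul (continuous_pow _)
    exact ContinuousAt.comp (f := fun z : ℂ => (z - a)⁻¹) h2.continuousAt h1
  have hfP : ∀ a z : D, z ≠ a → f.1 z * P a z = (e a * J a).1 z := by
    intro a z hz
    have hne : (z : ℂ) - a ≠ 0 := sub_ne_zero.2 fun h => hz (Subtype.ext h)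
    conv_lhs => rw [he a]
    simp only [mul_apply, pow_apply, X_apply, J, P, sum_apply, C_apply]
    rw [mul_comm (((z : ℂ) - a) ^ m a), mul_assoc, Finset.mul_sum]
    congr 1
    apply Finset.sum_congr rfl
    intro i hi
    have hi := Finset.mem_range.1 hi
    have : ((z : ℂ) - a) ^ m a = ((z : ℂ) - a) ^ i * ((z : ℂ) - a) ^ (m a - i) := by
      rw [← pow_add]; congr 1; omega
    rw [this, inv_pow]
    field_simp
  let ι := {a : D // f.1 a = 0}
  have : Countable ι := countable_zeros hD hc f hf
  cases nonempty_encodable ι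
  obtain ⟨u, hu0, s0, hus, -⟩ := posSumOfEncodable (zero_lt_one (α := ℝ)) ι
  choose Q hQd hQ using fun a : ι => (hP a).2 (u a) (hu0 a)
  let T : ι → Hol D := fun a => e a * J a - f * mk (Q a) (hQd a)
  have hT : ∀ (a : ι) (z : D), z ≠ a → (T a).1 z = f.1 z * (P a z - Q a z) := by
    intro a z hz
    rw [mul_sub, hfP _ _ hz]; rfl
  have hTE : ∀ (a : ι) (z : ℂ) (hz : z ∈ D), z ≠ a → E (T a) z = E f z * (P a z - Q a z) := by
    intro a z hz hne
    rw [E_eq' _ hz, E_eq' _ hz]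
    exact hT a ⟨z, hz⟩ fun h => hne (congrArg Subtype.val h)
  have hfinS : ∀ K, IsCompact K → K ⊆ D → {a : ι | ¬ K ⊆ S a}.Finite := by
    intro K hK hKD
    obtain ⟨K', hK', hKD', h'⟩ := hSK K hK hKD
    have hfin := finite_zeros hD hc f hf K' hK' hKD'
    refine (hfin.preimage (f := fun a : ι => ((a : D) : ℂ))
      (Subtype.val_injective.comp Subtype.val_injective).injOn).subset ?_
    intro a ha
    refine ⟨?_, by rw [E_eq]; exact a.2⟩
    by_contra hcon
    exact ha (h' a a.1.2 hcon)
  obtain ⟨g, hg⟩ := sum_lemma hD T u hus.summable (by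
    intro K hK hKD
    obtain ⟨B, hB⟩ := bdd_on f hK hKD
    refine ⟨B, (hfinS K hK hKD).subset ?_⟩
    intro a ha hKS
    apply ha
    intro z hz
    have hza : z ≠ a := by
      rintro rfl
      exact (hS _ a.1.2).1 (hKS hz)
    rw [hTE a z (hKD hz) hza, norm_mul]
    exact mul_le_mul (hB z hz) (hQ a z (hKS hz)) (norm_nonneg _) ((norm_nonneg _).trans (hB z hz)))
  refine ⟨g, fun b => ?_⟩
  by_cases hb : f.1 b = 0
  swap
  · have : m b = 0 := by
      by_contra h0
      apply hb
      rw [he b]; simp [h0]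
    simp [this]
  let b' : ι := ⟨b, hb⟩
  have hTb : X b ^ m b ∣ T b' - c b := by
    have h1 : T b' - c b = (e b * J b - c b) - f * mk (Q b') (hQd b') := by
      simp only [T, b']; ring
    rw [h1]
    refine dvd_sub (hJ b) (Dvd.dvd.mul_right ?_ _)
    exact ⟨e b, he b⟩
  have hrest : X b ^ m b ∣ g - T b' := by
    have hiso := isolated hD hc f hf b
    rw [eventually_nhdsWithin_iff] at hiso
    obtain ⟨r, hr, hball⟩ := Metric.nhds_basis_closedBall.mem_iff.1
      (Filter.inter_mem hiso (hD.mem_nhds b.2))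
    set K := Metric.closedBall (b : ℂ) r with hKdef
    have hK : IsCompact K := isCompact_closedBall _ _
    have hKD : K ⊆ D := fun z hz => (hball hz).2
    have hnota : ∀ a : ι, a ≠ b' → ∀ z ∈ K, z ≠ a := by
      rintro a hab z hz rfl
      refine (hball hz).1 ?_ (by rw [E_eq]; exact a.2)
      intro h
      exact hab (Subtype.ext (Subtype.ext h))
    have hbd : ∀ a : ι, ∃ B : ℝ, a ≠ b' → ∀ z ∈ K, ‖P a z - Q a z‖ ≤ B := by
      intro a
      by_cases hab : a = b'
      · exact ⟨0, fun h => absurd hab h⟩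
      have hcont : ContinuousOn (fun z => P a z - Q a z) K := by
        apply ContinuousOn.sub
        · intro z hz
          exact (hPd a z (hnota a hab z hz)).continuousWithinAt
        · exact (hQd a).continuousOn.mono hKD
      obtain ⟨B, hB⟩ := hK.exists_bound_of_continuousOn hcont
      exact ⟨B, fun _ => hB⟩
    choose B hB using hbd
    have hsum := summable_fix hus.summable (fun a : ι => K ⊆ S a) (fun a => |B a|) (hfinS K hK hKD)
    set v : ι → ℝ := fun a => if K ⊆ S a then u a else |B a| with hv
    have hv0 : ∀ a, 0 ≤ v a := by
      intro a; simp only [hv]; split_ifs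
      · exact (hu0 a).le
      · exact abs_nonneg _
    have hvb : ∀ a : ι, a ≠ b' → ∀ z ∈ K, ‖P a z - Q a z‖ ≤ v a := by
      intro a hab z hz
      simp only [hv]; split_ifs with h
      · exact hQ a z (h hz)
      · exact (hB a hab z hz).trans (le_abs_self _)
    obtain ⟨B2, hB2⟩ := bdd_on (e b) hK hKD
    apply bigO_dvd hD b ((∑' a, v a) * B2)
    have hKn : K ∈ 𝓝[≠] (b : ℂ) := nhdsWithin_le_nhds (Metric.closedBall_mem_nhds _ hr)
    filter_upwards [hKn] with z hz
    have hzD := hKD hz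
    have hs1 : HasSum (fun a => if a = b' then 0 else (T a).1 ⟨z, hzD⟩) ((g - T b').1 ⟨z, hzD⟩) := by
      have := (hg ⟨z, hzD⟩).update b' 0
      rw [zero_sub, neg_add_eq_sub] at this
      have h2 : (fun a => if a = b' then 0 else (T a).1 ⟨z, hzD⟩)
          = Function.update (fun a => (T a).1 ⟨z, hzD⟩) b' 0 := by
        funext a
        by_cases hab : a = b'
        · subst hab; simp
        · simp [hab]
      rw [h2]
      exact this
    have hs2 : HasSum (fun a => v a * ‖f.1 ⟨z, hzD⟩‖) ((∑' a, v a) * ‖f.1 ⟨z, hzD⟩‖) :=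
      hsum.hasSum.mul_right _
    have hle : ‖(g - T b').1 ⟨z, hzD⟩‖ ≤ (∑' a, v a) * ‖f.1 ⟨z, hzD⟩‖ := by
      rw [← hs1.tsum_eq]
      refine tsum_of_norm_bounded hs2 ?_
      intro a
      split_ifs with hab
      · simpa using mul_nonneg (hv0 a) (norm_nonneg _)
      · have hza := hnota a hab z hz
        rw [hT a ⟨z, hzD⟩ fun h => hza (congrArg Subtype.val h), norm_mul, mul_comm]
        gcongr
        exact hvb a hab z hz
    rw [E_eq' _ hzD]
    refine hle.trans ?_
    rw [mul_assoc]
    refine mul_le_mul_of_nonneg_left ?_ (tsum_nonneg hv0)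
    have hfz : f.1 ⟨z, hzD⟩ = (z - b) ^ m b * (e b).1 ⟨z, hzD⟩ := by
      conv_lhs => rw [he b]
      simp
    rw [hfz, norm_mul, norm_pow, mul_comm]
    gcongr
    rw [← E_eq' _ hzD]
    exact hB2 z hz
  have : g - c b = (g - T b') + (T b' - c b) := by ring
  rw [this]
  exact dvd_add hrest hTb

theorem inv_mod (hD : IsOpen D) (a : D) (h : Hol D) (ha : h.1 a ≠ 0) (m : ℕ) :
    ∃ c : Hol D, X a ^ m ∣ c * h - 1 := by
  obtain ⟨p, hp⟩ := exists_jet hD a h 1 ha m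
  exact ⟨_, by rw [mul_comm]; exact hp⟩

theorem bezout (hD : IsOpen D) (hc : IsConnected D) (f h₁ h₂ : Hol D) (hf : f ≠ 0)
    (hz : ∀ a : D, f.1 a = 0 → h₁.1 a = 0 → h₂.1 a = 0 → False) (I : Ideal (Hol D))
    (hfI : f ∈ I) (h1 : h₁ ∈ I) (h2 : h₂ ∈ I) : I = ⊤ := by
  choose m e he hea using exists_factor hD hc f hf
  have hloc : ∀ a : D, ∃ c d : Hol D, X a ^ m a ∣ c * h₁ + d * h₂ - 1 := by
    intro a
    by_cases hfa : f.1 a = 0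
    · by_cases h1a : h₁.1 a = 0
      · obtain ⟨d, hd⟩ := inv_mod hD a h₂ (fun h => hz a hfa h1a h) (m a)
        exact ⟨0, d, by simpa using hd⟩
      · obtain ⟨d, hd⟩ := inv_mod hD a h₁ h1a (m a)
        exact ⟨d, 0, by simpa using hd⟩
    · have : m a = 0 := by
        by_contra h0
        apply hfa
        rw [he a]; simp [h0]
      exact ⟨0, 0, by simp [this]⟩
  choose c d hcd using hloc
  obtain ⟨x, hx⟩ := interp hD hc f hf m e he hea c
  obtain ⟨y, hy⟩ := interp hD hc f hf m e he hea d
  have hdvd : f ∣ x * h₁ + y * h₂ - 1 := by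
    apply dvd_of_local hD
    intro a
    refine ⟨m a, e a, he a, hea a, ?_⟩
    have : x * h₁ + y * h₂ - 1 = (x - c a) * h₁ + (y - d a) * h₂ + (c a * h₁ + d a * h₂ - 1) := by
      ring
    rw [this]
    exact dvd_add (dvd_add ((hx a).mul_right _) ((hy a).mul_right _)) (hcd a)
  obtain ⟨q, hq⟩ := hdvd
  rw [Ideal.eq_top_iff_one]
  have : (1 : Hol D) = x * h₁ + y * h₂ - f * q := by rw [← hq]; ring
  rw [this]
  exact I.sub_mem (I.add_mem (I.mul_mem_left _ h1) (I.mul_mem_left _ h2)) (I.mul_mem_right _ hfI)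

theorem exists_simple (hD : IsOpen D) (hc : IsConnected D) (f : Hol D) (hf : f ≠ 0) :
    ∃ p : Hol D, ∀ a : D, f.1 a = 0 → ∃ e : Hol D, p = X a * e ∧ e.1 a ≠ 0 := by
  choose m e he hea using exists_factor hD hc f hf
  have := noZeroDiv hD hc
  obtain ⟨g, hg⟩ := interp hD hc (f ^ 2) (pow_ne_zero 2 hf) (fun a => m a * 2) (fun a => e a ^ 2)
    (fun a => by conv_lhs => rw [he a, mul_pow, ← pow_mul])
    (fun a => by simpa using hea a) (fun a => X a)
  refine ⟨g, fun a ha => ?_⟩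
  obtain ⟨q, hq⟩ := hg a
  have hm : m a ≠ 0 := by
    intro h0
    apply hea a
    rw [he a, h0] at ha
    simpa using ha
  obtain ⟨k, hk⟩ := Nat.exists_eq_succ_of_ne_zero hm
  refine ⟨1 + X a * (X a ^ (2 * k) * q), ?_, by simp⟩
  have h1 : g = X a + X a ^ (m a * 2) * q := by rw [← hq]; ring
  have h2 : m a * 2 = 2 * k + 2 := by omega
  rw [h1, h2]; ring

theorem main (hD : IsOpen D) (hc : IsConnected D)
    (M : Ideal (Hol D)) (hM : M.IsMaximal)
    (hfree : (⋂ g ∈ M, ZD g) = (∅ : Set D)) :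
    (ki M).IsPrime ∧ ki M ≤ M ∧ ¬ (ki M).IsMaximal ∧ ki M ≠ M ∧
      ∀ P : Ideal (Hol D), P.IsPrime → ki M ≤ P → P ≤ M → P = ki M ∨ P = M := by
  have := noZeroDiv hD hc
  have hex : ∃ f ∈ M, f ≠ 0 := by
    by_contra hcon
    push Not at hcon
    obtain ⟨a, ha⟩ := hc.nonempty
    have : (⟨a, ha⟩ : D) ∈ ⋂ g ∈ M, ZD g := by
      simp only [Set.mem_iInter]
      intro g hg
      rw [hcon g hg]
      rfl
    rw [hfree] at this
    exact this
  obtain ⟨f, hfM, hf⟩ := hex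
  obtain ⟨p, hp⟩ := exists_simple hD hc f hf
  have hpa : ∀ a, f.1 a = 0 → p.1 a = 0 := by
    intro a ha
    obtain ⟨e, he, -⟩ := hp a ha
    rw [he]; simp
  have hpM : p ∈ M := by
    by_contra hpM
    obtain ⟨y, i, hi, hy⟩ := hM.exists_inv hpM
    refine hM.ne_top (bezout hD hc f i 0 hf ?_ M hfM hi M.zero_mem)
    intro a ha hia _
    have := congrArg (fun x : Hol D => x.1 a) hy
    simp [hpa a ha, hia] at this
  have hfz : ∃ a, f.1 a = 0 := by
    by_contra hcon
    push Not at hcon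
    exact hM.ne_top (bezout hD hc f 0 0 hf (fun a ha _ _ => hcon a ha) M hfM M.zero_mem M.zero_mem)
  have hp0 : p ≠ 0 := by
    obtain ⟨a, ha⟩ := hfz
    obtain ⟨e, he, hea⟩ := hp a ha
    rw [he]
    refine mul_ne_zero ?_ ?_
    · intro h0
      have h2 : ∀ᶠ z in 𝓝[≠] (a : ℂ), z ∈ D ∧ z ≠ a :=
        Filter.inter_mem (nhdsWithin_le_nhds (hD.mem_nhds a.2)) self_mem_nhdsWithin
      obtain ⟨z, hz, hza⟩ := h2.exists
      have := congrArg (fun x : Hol D => x.1 ⟨z, hz⟩) h0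
      simp only [X_apply, zero_apply] at this
      exact hza (sub_eq_zero.1 this)
    · intro h0
      apply hea
      rw [h0]; rfl
  refine alg M hM p hpM hp0 ?_
  intro u hu
  have hfac : ∀ a : D, ∃ (m : ℕ) (e : Hol D), p = X a ^ m * e ∧ e.1 a ≠ 0 ∧
      (f.1 a = 0 → m = 1) := by
    intro a
    by_cases ha : f.1 a = 0
    · obtain ⟨e, he, hea⟩ := hp a ha
      exact ⟨1, e, by simpa using he, hea, fun _ => rfl⟩
    · obtain ⟨m, e, he, hea⟩ := exists_factor hD hc p hp0 a
      exact ⟨m, e, he, hea, fun h => absurd h ha⟩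
  choose m e he hea hm using hfac
  classical
  obtain ⟨s, hs⟩ := interp hD hc p hp0 m e he hea
    (fun a => if f.1 a = 0 ∧ u.1 a = 0 then 1 else 0)
  refine ⟨s, ?_, ?_⟩
  · intro hsM
    refine hM.ne_top (bezout hD hc f u s hf ?_ M hfM hu hsM)
    intro a hfa hua hsa
    obtain ⟨q, hq⟩ := hs a
    rw [if_pos ⟨hfa, hua⟩, hm a hfa] at hq
    have := congrArg (fun x : Hol D => x.1 a) hq
    simp [hsa] at this
  · apply dvd_of_local hD
    intro a
    refine ⟨m a, e a, he a, hea a, ?_⟩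
    have hsa := hs a
    by_cases h : f.1 a = 0 ∧ u.1 a = 0
    · rw [hm a h.1, pow_one]
      exact (dvd_X hD u a h.2).mul_left s
    · rw [if_neg h, sub_zero] at hsa
      exact hsa.mul_right u

end KiProof

/-- Let `D` be a domain in `ℂ` and `M` a free maximal ideal of `H(D)`. Then
`ki(M) = ⋂_{n=1}^∞ Mⁿ` is a non-maximal prime ideal strictly contained in `M`, and it is the
largest non-maximal prime ideal contained in `M`: every prime ideal `P` with
`ki(M) ⊆ P ⊆ M` equals `ki(M)` or `M`. -/
theorem ki_largest_nonmaximal_prime {D : Set ℂ} (hD : IsOpen D) (hDconn : IsConnected D)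
    (M : Ideal (Hol D)) (hM : M.IsMaximal)
    (hfree : (⋂ g ∈ M, ZD g) = (∅ : Set D)) :
    (ki M).IsPrime ∧ ki M ≤ M ∧ ¬ (ki M).IsMaximal ∧ ki M ≠ M ∧
      ∀ P : Ideal (Hol D), P.IsPrime → ki M ≤ P → P ≤ M → P = ki M ∨ P = M := by
  exact KiProof.main hD hDconn M hM hfree
end
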